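/- Mixing: suppose ε < 0 or ε > 2/π. Then the dynamical system (I × I, T̃_ε, μ) is mixing: for all measurable sets A, B ⊆ I × I, μ(T̃_ε^{−n}(A) ∩ B) converges to μ(A)·μ(B) as n → ∞. -/

import Mathlib

/-!
Write the map as the recursion `q (j + 2) ≡ f (q (j + 1)) - q j` modulo `1`. For the parameters in
question `f` maps `(-1/2, 1/2)` onto `ℝ` and expands by a factor `L > 2`, and the logarithm of the
derivative of its inverse is Lipschitz. Hence every finite word of integers is the itinerary of an
orbit segment with arbitrary endpoints, and the first coordinate stretches along a cylinder by a
continuant of expansion factors. The expansion gives bounded distortion for these continuants, so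
the measure of a cylinder is at least a constant times the product of the measures of the two pieces
of its word: the future is quasi-independent of the past. In `L²` this is a positive angle between
cylinder functions and their translates by the Koopman isometry, which forces the tail space
`⋂ n, Uⁿ G` to consist of constants, and an isometry with trivial tail is mixing.
-/

open MeasureTheory Real Filter

/-- `rmod x` is the unique representative of `x` modulo 1 lying in `[-1/2, 1/2)`. -/
noncomputable def rmod (x : ℝ) : ℝ := x - ⌊x + 1/2⌋

/-- The map `T̃_ε (p, q) = (q, ⟪2q - p - 2ε tan(π q)⟫)`. -/
noncomputable def Ttilde (ε : ℝ) : ℝ × ℝ → ℝ × ℝ := fun x =>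
  (rmod x.2, rmod (2 * x.2 - x.1 - 2 * ε * Real.tan (Real.pi * x.2)))

/-- The unit square `I × I` with `I = [-1/2, 1/2)`. -/
def unitSq : Set (ℝ × ℝ) := Set.Ico (-(1:ℝ)/2) (1/2) ×ˢ Set.Ico (-(1:ℝ)/2) (1/2)

/-- The uniform (Lebesgue) probability measure on `I × I`. -/
noncomputable def unifSq : Measure (ℝ × ℝ) := volume.restrict unitSq

section HilbertSpace

variable {𝕜 H : Type*} [RCLike 𝕜] [NormedAddCommGroup H]

local notation "⟪" x ", " y "⟫" => inner ℝ x y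

theorem tendsto_inner_of_mem_iInf_orthogonal [InnerProductSpace 𝕜 H] [CompleteSpace H]
    {F : ℕ → Submodule 𝕜 H} (hF : Antitone F) [∀ n, (F n).HasOrthogonalProjection]
    {u : ℕ → H} (hu : ∀ n, u n ∈ F n) {r : ℝ} (hr : ∀ n, ‖u n‖ ≤ r) {g : H}
    (hg : g ∈ (⨅ n, F n)ᗮ) :
    Tendsto (fun n => inner 𝕜 (u n) g) atTop (nhds 0) := by
  have hclosure : (⨆ n, (F n)ᗮ).topologicalClosure = (⨅ n, F n)ᗮ := by
    rw [← Submodule.orthogonal_orthogonal_eq_closure, ← Submodule.iInf_orthogonal]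
    simp only [Submodule.orthogonal_orthogonal]
  have hproj : Tendsto (fun n => (F n)ᗮ.starProjection g) atTop (nhds g) := by
    have := Submodule.starProjection_tendsto_closure_iSup (fun n => (F n)ᗮ)
      (fun _ _ h => Submodule.orthogonal_le (hF h)) g
    rwa [Submodule.starProjection_eq_self_iff.2 (hclosure ▸ hg)] at this
  have hinner (n : ℕ) : inner 𝕜 (u n) g = inner 𝕜 (u n) (g - (F n)ᗮ.starProjection g) := by
    rw [inner_sub_right, Submodule.inner_right_of_mem_orthogonal (hu n)
      (Submodule.starProjection_apply_mem _ g), sub_zero]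
  have hbound : Tendsto (fun n => r * ‖g - (F n)ᗮ.starProjection g‖) atTop (nhds 0) := by
    simpa using (hproj.const_sub g).norm.const_mul r
  refine squeeze_zero_norm (fun n => ?_) hbound
  rw [hinner]
  exact (norm_inner_le_norm _ _).trans (mul_le_mul_of_nonneg_right (hr n) (norm_nonneg _))

theorem tendsto_inner_pow_of_mem_iInf_orthogonal [InnerProductSpace 𝕜 H] [CompleteSpace H]
    (U : H →ₗᵢ[𝕜] H) {G : Submodule 𝕜 H} (hGc : IsClosed (G : Set H)) (hG : ∀ f ∈ G, U f ∈ G)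
    {f g : H} (hf : f ∈ G) (hg : g ∈ (⨅ n : ℕ, G.map (U ^ n).toLinearMap)ᗮ) :
    Tendsto (fun n => inner 𝕜 ((U ^ n) f) g) atTop (nhds 0) := by
  have hanti : Antitone fun n : ℕ => G.map (U ^ n).toLinearMap := by
    refine antitone_nat_of_succ_le fun n => ?_
    rintro _ ⟨h, hh, rfl⟩
    exact ⟨U h, hG h hh, by simp [pow_succ]⟩
  have (n : ℕ) : CompleteSpace (G.map (U ^ n).toLinearMap) :=
    ((U ^ n).isComplete_map_iff.2 hGc.isComplete).completeSpace_coe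
  exact tendsto_inner_of_mem_iInf_orthogonal hanti
    (fun n => Submodule.mem_map_of_mem hf) (fun n => ((U ^ n).norm_map f).le) hg

theorem tendsto_inner_pow_of_forall_approx [InnerProductSpace 𝕜 H] (U : H →ₗᵢ[𝕜] H) {G : Set H}
    {g : H} (hG : ∀ w ∈ G, Tendsto (fun n => inner 𝕜 ((U ^ n) w) g) atTop (nhds 0)) {f : H}
    (hf : ∀ δ > 0, ∃ m, ∃ w ∈ G, ‖(U ^ m) f - w‖ ≤ δ) :
    Tendsto (fun n => inner 𝕜 ((U ^ n) f) g) atTop (nhds 0) := by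
  rw [Metric.tendsto_nhds]
  intro δ hδ
  obtain ⟨m, w, hw, hfw⟩ := hf (δ / (2 * (‖g‖ + 1))) (by positivity)
  have hgδ : δ / (2 * (‖g‖ + 1)) * ‖g‖ < δ / 2 := by
    rw [div_mul_eq_mul_div, div_lt_div_iff₀ (by positivity) two_pos]
    nlinarith
  rw [← map_add_atTop_eq_nat m, eventually_map]
  filter_upwards [Metric.tendsto_nhds.1 (hG w hw) (δ / 2) (half_pos hδ)] with n hn
  rw [dist_zero_right] at hn ⊢
  calc ‖inner 𝕜 ((U ^ (n + m)) f) g‖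
      = ‖inner 𝕜 ((U ^ n) ((U ^ m) f - w)) g + inner 𝕜 ((U ^ n) w) g‖ := by
        rw [← inner_add_left, ← map_add, sub_add_cancel, pow_add, LinearIsometry.coe_mul,
          Function.comp_apply]
    _ ≤ ‖(U ^ m) f - w‖ * ‖g‖ + ‖inner 𝕜 ((U ^ n) w) g‖ := by
        refine (norm_add_le _ _).trans (add_le_add_left ?_ _)
        exact (norm_inner_le_norm _ _).trans_eq (by rw [LinearIsometry.norm_map])
    _ < δ := by linarith [mul_le_mul_of_nonneg_right hfw (norm_nonneg g)]

theorem closure_iSup_induction [NormedSpace 𝕜 H] {W : ℕ → Submodule 𝕜 H} (hW : Monotone W)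
    {P : H → Prop} (hP : IsClosed {f | P f}) (mem : ∀ m, ∀ f ∈ W m, P f) {f : H}
    (hf : f ∈ (⨆ m, W m).topologicalClosure) : P f := by
  refine closure_minimal (t := {f | P f}) (fun g hg => ?_) hP hf
  obtain ⟨m, hm⟩ := (Submodule.mem_iSup_of_directed W hW.directed_le).1 hg
  exact mem m g hm

variable [InnerProductSpace ℝ H] {U : H →ₗᵢ[ℝ] H} {e : H} {W : ℕ → Submodule ℝ H} {c : ℝ}

theorem inner_pow_of_fixed (hUe : U e = e) (n : ℕ) (f : H) : ⟪(U ^ n) f, e⟫ = ⟪f, e⟫ := by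
  have hpow : (U ^ n) e = e := by
    rw [LinearIsometry.coe_pow]
    exact Function.iterate_fixed hUe n
  conv_lhs => rw [← hpow, LinearIsometry.inner_map_map]

theorem iInf_map_pow_le_span_of_angle (he : ‖e‖ = 1) (hUe : U e = e) (hW : Monotone W)
    (hc : 0 < c) (hangle : ∀ m l, ∀ f ∈ W m, ∀ h ∈ W l,
      c * (‖f‖ ^ 2 + ‖h‖ ^ 2 - 2 * (⟪f, e⟫ * ⟪h, e⟫)) ≤ ‖f - (U ^ m) h‖ ^ 2) :
    ⨅ n : ℕ, (⨆ m, W m).topologicalClosure.map (U ^ n).toLinearMap ≤ ℝ ∙ e := by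
  intro x hx
  replace hx (n : ℕ) : ∃ h ∈ (⨆ m, W m).topologicalClosure, (U ^ n) h = x :=
    (Submodule.mem_iInf _).1 hx n
  have hfx (m : ℕ) (f : H) (hf : f ∈ W m) :
      c * (‖f‖ ^ 2 + ‖x‖ ^ 2 - 2 * (⟪f, e⟫ * ⟪x, e⟫)) ≤ ‖f - x‖ ^ 2 := by
    obtain ⟨h, hh, rfl⟩ := hx m
    rw [LinearIsometry.norm_map, inner_pow_of_fixed hUe]
    exact closure_iSup_induction hW
      (P := fun h => c * (‖f‖ ^ 2 + ‖h‖ ^ 2 - 2 * (⟪f, e⟫ * ⟪h, e⟫)) ≤ ‖f - (U ^ m) h‖ ^ 2)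
      (isClosed_le (by fun_prop) (by fun_prop)) (fun l h hl => hangle m l f hf h hl) hh
  have hxx : c * (‖x‖ ^ 2 + ‖x‖ ^ 2 - 2 * (⟪x, e⟫ * ⟪x, e⟫)) ≤ ‖x - x‖ ^ 2 := by
    refine closure_iSup_induction hW
      (P := fun f => c * (‖f‖ ^ 2 + ‖x‖ ^ 2 - 2 * (⟪f, e⟫ * ⟪x, e⟫)) ≤ ‖f - x‖ ^ 2)
      (isClosed_le (by fun_prop) (by fun_prop)) hfx ?_
    obtain ⟨h, hh, hhx⟩ := hx 0
    rwa [← hhx]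
  have hproj : ‖x - ⟪x, e⟫ • e‖ ^ 2 ≤ 0 := by
    rw [norm_sub_sq_real, inner_smul_right, norm_smul, he, Real.norm_eq_abs, mul_one, sq_abs]
    rw [sub_self, norm_zero] at hxx
    nlinarith [nonpos_of_mul_nonpos_right (hxx.trans (by norm_num)) hc]
  rw [Submodule.mem_span_singleton]
  exact ⟨⟪x, e⟫, (sub_eq_zero.1 (norm_eq_zero.1 (pow_eq_zero_iff two_ne_zero |>.1
    (hproj.antisymm (sq_nonneg _))))).symm⟩

theorem tendsto_inner_pow_of_angle [CompleteSpace H] (he : ‖e‖ = 1) (hUe : U e = e)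
    (hW : Monotone W) (hUW : ∀ m, ∀ f ∈ W m, U f ∈ W (m + 1)) (hc : 0 < c)
    (hangle : ∀ m l, ∀ f ∈ W m, ∀ h ∈ W l,
      c * (‖f‖ ^ 2 + ‖h‖ ^ 2 - 2 * (⟪f, e⟫ * ⟪h, e⟫)) ≤ ‖f - (U ^ m) h‖ ^ 2)
    {f : H} (hf : ∀ δ > 0, ∃ m l, ∃ w ∈ W l, ‖(U ^ m) f - w‖ ≤ δ) (g : H) :
    Tendsto (fun n => ⟪(U ^ n) f, g⟫) atTop (nhds (⟪f, e⟫ * ⟪g, e⟫)) := by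
  set G := (⨆ m, W m).topologicalClosure
  have hWG (l : ℕ) : W l ≤ G := (le_iSup W l).trans (Submodule.le_topologicalClosure _)
  have hG : IsClosed (G : Set H) := Submodule.isClosed_topologicalClosure _
  have hUG : ∀ h ∈ G, U h ∈ G := fun h hh =>
    closure_iSup_induction hW (P := fun h => U h ∈ G) (hG.preimage U.continuous)
      (fun m w hw => hWG (m + 1) (hUW m w hw)) hh
  have hgorth : g - ⟪g, e⟫ • e ∈ (ℝ ∙ e)ᗮ := by
    rw [Submodule.mem_orthogonal_singleton_iff_inner_left, inner_sub_left, inner_smul_left,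
      real_inner_self_eq_norm_sq, he, one_pow, mul_one]
    exact sub_self _
  have hspan := Submodule.orthogonal_le (iInf_map_pow_le_span_of_angle he hUe hW hc hangle) hgorth
  have hlim : Tendsto (fun n => ⟪(U ^ n) f, g - ⟪g, e⟫ • e⟫) atTop (nhds 0) := by
    refine tendsto_inner_pow_of_forall_approx U
      (fun w hw => tendsto_inner_pow_of_mem_iInf_orthogonal U hG hUG hw hspan) fun δ hδ => ?_
    obtain ⟨m, l, w, hw, hfw⟩ := hf δ hδ
    exact ⟨m, w, hWG l hw, hfw⟩
  have heq (n : ℕ) : ⟪(U ^ n) f, g⟫ = ⟪(U ^ n) f, g - ⟪g, e⟫ • e⟫ + ⟪f, e⟫ * ⟪g, e⟫ := by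
    rw [inner_sub_right, inner_smul_right, inner_pow_of_fixed hUe]
    ring
  simpa only [heq, zero_add] using hlim.add_const (⟪f, e⟫ * ⟪g, e⟫)

end HilbertSpace

section QuasiIndependence

open scoped NNReal

theorem measure_le_of_singleton_le {α : Type*} [MeasurableSpace α] [Countable α]
    [MeasurableSingletonClass α] {μ ν : Measure α} (h : ∀ a, μ {a} ≤ ν {a}) : μ ≤ ν := by
  refine Measure.le_intro fun s hs _ => ?_
  rw [← Measure.tsum_indicator_apply_singleton μ s hs,
    ← Measure.tsum_indicator_apply_singleton ν s hs]
  exact ENNReal.tsum_le_tsum fun a => Set.indicator_le_indicator (h a)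

theorem integral_sq_sub_prod {ν ν' : Measure ℝ} [IsProbabilityMeasure ν] [IsProbabilityMeasure ν']
    (hν : MemLp id 2 ν) (hν' : MemLp id 2 ν') :
    ∫ p : ℝ × ℝ, (p.1 - p.2) ^ 2 ∂ν.prod ν' =
      ∫ x, x ^ 2 ∂ν + ∫ y, y ^ 2 ∂ν' - 2 * ((∫ x, x ∂ν) * ∫ y, y ∂ν') := by
  have hsq (p : ℝ × ℝ) : (p.1 - p.2) ^ 2 = p.1 ^ 2 + p.2 ^ 2 - 2 * (p.1 * p.2) := by ring
  have hfst : Integrable (fun p : ℝ × ℝ => p.1 ^ 2) (ν.prod ν') := hν.integrable_sq.comp_fst ν'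
  have hsnd : Integrable (fun p : ℝ × ℝ => p.2 ^ 2) (ν.prod ν') := hν'.integrable_sq.comp_snd ν
  have hmul : Integrable (fun p : ℝ × ℝ => p.1 * p.2) (ν.prod ν') :=
    (hν.integrable one_le_two).mul_prod (hν'.integrable one_le_two)
  simp_rw [hsq]
  rw [integral_sub (hfst.fun_add hsnd) (hmul.const_mul 2), integral_add hfst hsnd,
    integral_const_mul, integral_fun_fst (fun x => x ^ 2), integral_fun_snd (fun x => x ^ 2),
    integral_prod_mul (fun x => x) (fun x => x)]
  simp only [probReal_univ, one_smul]

variable {Ω : Type*} [MeasurableSpace Ω] {μ : Measure Ω} {c : ℝ≥0}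

/-- One-sided independence of two random variables: their joint law dominates a fixed multiple `c`
of the product of their laws. -/
def QuasiIndepFun {α β : Type*} [MeasurableSpace α] [MeasurableSpace β] (c : ℝ≥0) (X : Ω → α)
    (Y : Ω → β) (μ : Measure Ω) : Prop :=
  c • (μ.map X).prod (μ.map Y) ≤ μ.map fun ω => (X ω, Y ω)

namespace QuasiIndepFun

theorem comp [SFinite μ] {α β α' β' : Type*} [MeasurableSpace α] [MeasurableSpace β]
    [MeasurableSpace α'] [MeasurableSpace β'] {X : Ω → α} {Y : Ω → β}
    (h : QuasiIndepFun c X Y μ) (hX : Measurable X) (hY : Measurable Y)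
    {φ : α → α'} {ψ : β → β'} (hφ : Measurable φ) (hψ : Measurable ψ) :
    QuasiIndepFun c (φ ∘ X) (ψ ∘ Y) μ := by
  rw [QuasiIndepFun, ← Measure.map_map hφ hX, ← Measure.map_map hψ hY,
    Measure.map_prod_map _ _ hφ hψ, ← Measure.map_smul]
  refine (Measure.map_mono h (hφ.prodMap hψ)).trans_eq ?_
  rw [Measure.map_map (hφ.prodMap hψ) (hX.prodMk hY)]
  rfl

theorem integral_sq_sub_le [IsProbabilityMeasure μ] {X Y : Ω → ℝ} (h : QuasiIndepFun c X Y μ)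
    (hXm : Measurable X) (hYm : Measurable Y) (hX : MemLp X 2 μ) (hY : MemLp Y 2 μ) :
    c * (∫ ω, X ω ^ 2 ∂μ + ∫ ω, Y ω ^ 2 ∂μ - 2 * ((∫ ω, X ω ∂μ) * ∫ ω, Y ω ∂μ))
      ≤ ∫ ω, (X ω - Y ω) ^ 2 ∂μ := by
  have hXY := hXm.prodMk hYm
  have := Measure.isProbabilityMeasure_map hXm.aemeasurable (μ := μ)
  have := Measure.isProbabilityMeasure_map hYm.aemeasurable (μ := μ)
  have hX' : MemLp id 2 (μ.map X) :=
    (memLp_map_measure_iff aestronglyMeasurable_id hXm.aemeasurable).2 hX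
  have hY' : MemLp id 2 (μ.map Y) :=
    (memLp_map_measure_iff aestronglyMeasurable_id hYm.aemeasurable).2 hY
  have hint : Integrable (fun p : ℝ × ℝ => (p.1 - p.2) ^ 2) (μ.map fun ω => (X ω, Y ω)) :=
    (integrable_map_measure (by fun_prop) hXY.aemeasurable).2 (hX.sub hY).integrable_sq
  calc _ = ∫ p : ℝ × ℝ, (p.1 - p.2) ^ 2 ∂(c • (μ.map X).prod (μ.map Y)) := by
        rw [integral_smul_nnreal_measure, integral_sq_sub_prod hX' hY',
          integral_map hXm.aemeasurable (by fun_prop), integral_map hYm.aemeasurable (by fun_prop),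
          integral_map hXm.aemeasurable (by fun_prop), integral_map hYm.aemeasurable (by fun_prop)]
        rfl
    _ ≤ ∫ p : ℝ × ℝ, (p.1 - p.2) ^ 2 ∂(μ.map fun ω => (X ω, Y ω)) :=
        integral_mono_measure h (ae_of_all _ fun p => sq_nonneg _) hint
    _ = _ := integral_map hXY.aemeasurable (by fun_prop)

theorem norm_sub_sq_le [IsProbabilityMeasure μ] {X Y : Ω → ℝ} (h : QuasiIndepFun c X Y μ)
    (hX : Measurable X) (hY : Measurable Y) {f g : Lp ℝ 2 μ} (hf : f =ᵐ[μ] X) (hg : g =ᵐ[μ] Y) :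
    c * (‖f‖ ^ 2 + ‖g‖ ^ 2 - 2 * ((∫ ω, f ω ∂μ) * ∫ ω, g ω ∂μ)) ≤ ‖f - g‖ ^ 2 := by
  have hnorm {u : Lp ℝ 2 μ} {Z : Ω → ℝ} (hu : u =ᵐ[μ] Z) : ‖u‖ ^ 2 = ∫ ω, Z ω ^ 2 ∂μ := by
    rw [← real_inner_self_eq_norm_sq, L2.inner_def]
    refine integral_congr_ae ?_
    filter_upwards [hu] with ω hω
    rw [real_inner_self_eq_norm_sq, hω, Real.norm_eq_abs, sq_abs]
  rw [hnorm hf, hnorm hg, hnorm ((Lp.coeFn_sub f g).trans (hf.sub hg)), integral_congr_ae hf,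
    integral_congr_ae hg]
  exact h.integral_sq_sub_le hX hY ((memLp_congr_ae hf).1 (Lp.memLp f))
    ((memLp_congr_ae hg).1 (Lp.memLp g))

end QuasiIndepFun

end QuasiIndependence

section QuasiBernoulli

open scoped NNReal ENNReal

variable {X ι : Type*} {T : X → X} {κ : X → ι}

/-- The first `l` letters of the itinerary of `x` under `T`, with respect to the coding `κ`. -/
def word (T : X → X) (κ : X → ι) (l : ℕ) (x : X) : Fin l → ι := fun j => κ (T^[j] x)

theorem word_add (m l : ℕ) (x : X) :
    word T κ (m + l) x = Fin.append (word T κ m x) (word T κ l (T^[m] x)) := by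
  funext j
  refine Fin.addCases (fun i => ?_) (fun i => ?_) j
  · simp [word]
  · simp [word, ← Function.iterate_add_apply, add_comm]

theorem word_add_eq_append_iff {m l : ℕ} {x : X} {a : Fin m → ι} {b : Fin l → ι} :
    word T κ (m + l) x = Fin.append a b ↔ word T κ m x = a ∧ word T κ l (T^[m] x) = b := by
  rw [word_add, ← Prod.mk_inj, ← (Fin.appendEquiv m l).injective.eq_iff]
  rfl

/-- On `S`, a long initial itinerary of `x` determines some iterate `T^[m] x` up to any prescribed
error. This is the substitute, free of inverses of `T`, for two-sided itineraries separating points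
uniformly. -/
def IsGenerating [PseudoMetricSpace X] (T : X → X) (κ : X → ι) (S : Set X) : Prop :=
  ∀ r > 0, ∃ m l, ∀ x ∈ S, ∀ y ∈ S, word T κ l x = word T κ l y → dist (T^[m] x) (T^[m] y) < r

theorem IsGenerating.exists_word_approx [PseudoMetricSpace X] [Nonempty X] {S : Set X}
    (hS : IsGenerating T κ S) {u : X → ℝ} (hu : UniformContinuous u) {δ : ℝ} (hδ : 0 < δ) :
    ∃ m l, ∃ φ : (Fin l → ι) → ℝ, Set.range φ ⊆ Set.range u ∧
      ∀ x ∈ S, |u (T^[m] x) - φ (word T κ l x)| < δ := by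
  obtain ⟨r, hr, hur⟩ := Metric.uniformContinuous_iff.1 hu δ hδ
  obtain ⟨m, l, hml⟩ := hS r hr
  refine ⟨m, l, fun a => u (T^[m] (Function.invFunOn (word T κ l) S a)), ?_, fun x hx => ?_⟩
  · exact Set.range_subset_iff.2 fun a => Set.mem_range_self _
  · have hx' : ∃ y ∈ S, word T κ l y = word T κ l x := ⟨x, hx, rfl⟩
    exact hur (hml x hx _ (Function.invFunOn_mem hx') (Function.invFunOn_eq hx').symm)

variable [MeasurableSpace X] {μ : Measure X}

theorem measurable_word [MeasurableSpace ι] (hT : Measurable T) (hκ : Measurable κ) (l : ℕ) :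
    Measurable (word T κ l) :=
  measurable_pi_lambda _ fun j => hκ.comp (hT.iterate j)

/-- The lower half of the quasi-Bernoulli property of the coding `κ`: the measure of a cylinder is
at least a fixed multiple `c` of the product of the measures of the two cylinders obtained by
cutting its word in two. -/
def QuasiBernoulli (T : X → X) (κ : X → ι) (c : ℝ≥0) (μ : Measure X) : Prop :=
  ∀ m l (a : Fin m → ι) (b : Fin l → ι),
    c * (μ (word T κ m ⁻¹' {a}) * μ (word T κ l ⁻¹' {b})) ≤
      μ (word T κ (m + l) ⁻¹' {Fin.append a b})

theorem QuasiBernoulli.quasiIndepFun [Countable ι] [MeasurableSpace ι]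
    [MeasurableSingletonClass ι] [SFinite μ] {c : ℝ≥0} (h : QuasiBernoulli T κ c μ)
    (hT : MeasurePreserving T μ μ) (hκ : Measurable κ) (m l : ℕ) :
    QuasiIndepFun c (word T κ m) (word T κ l ∘ T^[m]) μ := by
  have hm := measurable_word hT.measurable hκ m
  have hl := measurable_word hT.measurable hκ l
  have hlT := hl.comp (hT.measurable.iterate m)
  refine measure_le_of_singleton_le fun ⟨a, b⟩ => ?_
  rw [← Set.singleton_prod_singleton, Measure.smul_apply, Measure.prod_prod,
    Measure.map_apply hm (measurableSet_singleton a),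
    Measure.map_apply hlT (measurableSet_singleton b), Set.preimage_comp,
    (hT.iterate m).measure_preimage (hl (measurableSet_singleton b)).nullMeasurableSet,
    Measure.map_apply (hm.prodMk hlT) (.prod (.singleton a) (.singleton b))]
  refine (h m l a b).trans_eq (congrArg μ (Set.ext fun x => ?_))
  exact word_add_eq_append_iff

/-- The functions in `L²(μ)` that depend only on the first `l` letters of the itinerary. -/
def cylinderFunctions (T : X → X) (κ : X → ι) (μ : Measure X) (l : ℕ) : Submodule ℝ (Lp ℝ 2 μ) where
  carrier := {f | ∃ φ : (Fin l → ι) → ℝ, f =ᵐ[μ] φ ∘ word T κ l}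
  zero_mem' := ⟨0, Lp.coeFn_zero ℝ 2 μ⟩
  add_mem' := by
    rintro f g ⟨φ, hφ⟩ ⟨ψ, hψ⟩
    exact ⟨φ + ψ, (Lp.coeFn_add f g).trans (hφ.add hψ)⟩
  smul_mem' := by
    rintro r f ⟨φ, hφ⟩
    exact ⟨r • φ, (Lp.coeFn_smul r f).trans (hφ.const_smul r)⟩

theorem cylinderFunctions_mono : Monotone (cylinderFunctions T κ μ) := by
  refine monotone_nat_of_le_succ fun l => ?_
  rintro f ⟨φ, hφ⟩
  exact ⟨φ ∘ Fin.init, hφ⟩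

theorem compMeasurePreserving_mem_cylinderFunctions (hT : MeasurePreserving T μ μ) {l : ℕ}
    {f : Lp ℝ 2 μ} (hf : f ∈ cylinderFunctions T κ μ l) :
    Lp.compMeasurePreservingₗᵢ ℝ T hT f ∈ cylinderFunctions T κ μ (l + 1) := by
  obtain ⟨φ, hφ⟩ := hf
  exact ⟨φ ∘ Fin.tail, (Lp.coeFn_compMeasurePreserving f hT).trans
    (hT.quasiMeasurePreserving.ae_eq_comp hφ)⟩

theorem compMeasurePreservingₗᵢ_pow (hT : MeasurePreserving T μ μ) (n : ℕ) :
    Lp.compMeasurePreservingₗᵢ ℝ T hT ^ n =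
      Lp.compMeasurePreservingₗᵢ (E := ℝ) (p := 2) ℝ T^[n] (hT.iterate n) := by
  refine DFunLike.coe_injective ?_
  rw [LinearIsometry.coe_pow]
  exact Lp.compMeasurePreserving_iterate hT n

theorem integral_compMeasurePreserving (hT : MeasurePreserving T μ μ) (f : Lp ℝ 2 μ) :
    ∫ x, Lp.compMeasurePreservingₗᵢ ℝ T hT f x ∂μ = ∫ x, f x ∂μ := by
  refine (integral_congr_ae (Lp.coeFn_compMeasurePreserving f hT)).trans ?_
  refine (integral_map hT.aemeasurable ?_).symm.trans (by rw [hT.map_eq])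
  exact hT.map_eq.symm ▸ Lp.aestronglyMeasurable f

theorem inner_compMeasurePreserving_pow_indicatorConstLp [IsFiniteMeasure μ]
    (hT : MeasurePreserving T μ μ) {A B : Set X} (hA : MeasurableSet A) (hB : MeasurableSet B)
    (n : ℕ) :
    inner ℝ ((Lp.compMeasurePreservingₗᵢ ℝ T hT ^ n)
      (indicatorConstLp 2 hA (measure_ne_top μ A) (1 : ℝ)))
      (indicatorConstLp 2 hB (measure_ne_top μ B) 1) = μ.real (T^[n] ⁻¹' A ∩ B) := by
  have hind := Lp.indicatorConstLp_compMeasurePreserving (p := 2) hA (measure_ne_top μ A) (1 : ℝ)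
    (hT.iterate n)
  rw [compMeasurePreservingₗᵢ_pow]
  exact (congrArg (inner ℝ · _) hind).trans
    (L2.real_inner_indicatorConstLp_one_indicatorConstLp_one ..)

theorem QuasiBernoulli.angle [IsProbabilityMeasure μ] [Countable ι] [MeasurableSpace ι]
    [MeasurableSingletonClass ι] {c : ℝ≥0} (h : QuasiBernoulli T κ c μ)
    (hT : MeasurePreserving T μ μ) (hκ : Measurable κ) {m l : ℕ} {f g : Lp ℝ 2 μ}
    (hf : f ∈ cylinderFunctions T κ μ m) (hg : g ∈ cylinderFunctions T κ μ l) :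
    c * (‖f‖ ^ 2 + ‖g‖ ^ 2 - 2 * ((∫ x, f x ∂μ) * ∫ x, g x ∂μ)) ≤
      ‖f - Lp.compMeasurePreservingₗᵢ ℝ T^[m] (hT.iterate m) g‖ ^ 2 := by
  obtain ⟨φ, hφ⟩ := hf
  obtain ⟨ψ, hψ⟩ := hg
  have hTm := hT.iterate m
  have hm := measurable_word hT.measurable hκ m
  have hl := (measurable_word hT.measurable hκ l).comp hTm.measurable
  have hφm := measurable_of_countable φ
  have hψm := measurable_of_countable ψ
  have hgT : Lp.compMeasurePreservingₗᵢ ℝ T^[m] hTm g =ᵐ[μ] ψ ∘ word T κ l ∘ T^[m] :=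
    (Lp.coeFn_compMeasurePreserving g hTm).trans (hTm.quasiMeasurePreserving.ae_eq_comp hψ)
  rw [← integral_compMeasurePreserving hTm g,
    ← (Lp.compMeasurePreservingₗᵢ ℝ T^[m] hTm).norm_map g]
  exact ((h.quasiIndepFun hT hκ m l).comp hm hl hφm hψm).norm_sub_sq_le
    (hφm.comp hm) (hψm.comp hl) hφ hgT

theorem IsGenerating.exists_norm_pow_toLp_sub_le [PseudoMetricSpace X] [IsProbabilityMeasure μ]
    [Countable ι] [MeasurableSpace ι] [MeasurableSingletonClass ι] {S : Set X}
    (hS : IsGenerating T κ S) (hSμ : ∀ᵐ x ∂μ, x ∈ S) (hT : MeasurePreserving T μ μ)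
    (hκ : Measurable κ) {u : X → ℝ} (hu : UniformContinuous u) {K : ℝ} (hK : ∀ x, ‖u x‖ ≤ K)
    (hu2 : MemLp u 2 μ) {δ : ℝ} (hδ : 0 < δ) :
    ∃ m l, ∃ w ∈ cylinderFunctions T κ μ l,
      ‖(Lp.compMeasurePreservingₗᵢ ℝ T hT ^ m) (hu2.toLp u) - w‖ ≤ δ := by
  have := μ.nonempty_of_neZero
  obtain ⟨m, l, φ, hφ, hφu⟩ := hS.exists_word_approx hu hδ
  have hw : MemLp (φ ∘ word T κ l) 2 μ := by
    refine MemLp.of_bound ((measurable_of_countable φ).comp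
      (measurable_word hT.measurable hκ l)).aestronglyMeasurable K (ae_of_all _ fun x => ?_)
    obtain ⟨y, hy⟩ := hφ (Set.mem_range_self (word T κ l x))
    rw [Function.comp_apply, ← hy]
    exact hK y
  refine ⟨m, l, hw.toLp _, ⟨φ, hw.coeFn_toLp⟩, ?_⟩
  rw [compMeasurePreservingₗᵢ_pow]
  refine (Lp.norm_le_of_ae_bound hδ.le ?_).trans_eq (by simp [measureUnivNNReal])
  filter_upwards [hSμ, Lp.coeFn_compMeasurePreserving (hu2.toLp u) (hT.iterate m),
    (hT.iterate m).quasiMeasurePreserving.ae hu2.coeFn_toLp, hw.coeFn_toLp,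
    Lp.coeFn_sub (Lp.compMeasurePreservingₗᵢ ℝ T^[m] (hT.iterate m) (hu2.toLp u)) (hw.toLp _)]
    with x hxS h1 h2 h3 h4
  rw [h4, Pi.sub_apply, h3]
  refine le_trans (le_of_eq ?_) (hφu x hxS).le
  rw [← h2]
  exact congrArg (fun y => |y - φ (word T κ l x)|) h1

theorem IsGenerating.exists_norm_pow_sub_le [PseudoMetricSpace X] [BorelSpace X]
    [WeaklyLocallyCompactSpace X] [μ.Regular] [IsProbabilityMeasure μ] [Countable ι]
    [MeasurableSpace ι] [MeasurableSingletonClass ι] {S : Set X} (hS : IsGenerating T κ S)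
    (hSμ : ∀ᵐ x ∂μ, x ∈ S) (hT : MeasurePreserving T μ μ) (hκ : Measurable κ) (f : Lp ℝ 2 μ)
    {δ : ℝ} (hδ : 0 < δ) :
    ∃ m l, ∃ w ∈ cylinderFunctions T κ μ l,
      ‖(Lp.compMeasurePreservingₗᵢ ℝ T hT ^ m) f - w‖ ≤ δ := by
  obtain ⟨u, hu_supp, hfu, hu_cont, hu⟩ := (Lp.memLp f).exists_hasCompactSupport_eLpNorm_sub_le
    (by norm_num) (ENNReal.ofReal_pos.2 (half_pos hδ)).ne'
  obtain ⟨K, hK⟩ := hu_supp.exists_bound_of_continuous hu_cont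
  obtain ⟨m, l, w, hw, huw⟩ := hS.exists_norm_pow_toLp_sub_le hSμ hT hκ
    (hu_supp.uniformContinuous_of_continuous hu_cont) hK hu (half_pos hδ)
  set V := Lp.compMeasurePreservingₗᵢ (E := ℝ) (p := 2) ℝ T hT
  have hfu' : ‖f - hu.toLp u‖ ≤ δ / 2 := by
    rw [Lp.norm_def]
    refine ENNReal.toReal_le_of_le_ofReal (half_pos hδ).le (le_trans (eLpNorm_congr_ae ?_).le hfu)
    exact (Lp.coeFn_sub f (hu.toLp u)).trans (.sub .rfl hu.coeFn_toLp)
  refine ⟨m, l, w, hw, ?_⟩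
  calc ‖(V ^ m) f - w‖ ≤ ‖(V ^ m) f - (V ^ m) (hu.toLp u)‖ + ‖(V ^ m) (hu.toLp u) - w‖ :=
        norm_sub_le_norm_sub_add_norm_sub _ _ _
    _ ≤ δ / 2 + δ / 2 := by
        rw [← map_sub, (V ^ m).norm_map]
        exact add_le_add hfu' huw
    _ = δ := add_halves δ

theorem QuasiBernoulli.tendsto_inner [PseudoMetricSpace X] [BorelSpace X]
    [WeaklyLocallyCompactSpace X] [μ.Regular] [IsProbabilityMeasure μ] [Countable ι]
    [MeasurableSpace ι] [MeasurableSingletonClass ι] {c : ℝ≥0} (hc : 0 < c)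
    (h : QuasiBernoulli T κ c μ) (hT : MeasurePreserving T μ μ) (hκ : Measurable κ) {S : Set X}
    (hS : IsGenerating T κ S) (hSμ : ∀ᵐ x ∂μ, x ∈ S) (f g : Lp ℝ 2 μ) :
    Tendsto (fun n => inner ℝ ((Lp.compMeasurePreservingₗᵢ ℝ T hT ^ n) f) g) atTop
      (nhds ((∫ x, f x ∂μ) * ∫ x, g x ∂μ)) := by
  let e : Lp ℝ 2 μ := indicatorConstLp 2 .univ (measure_ne_top μ _) 1
  have hinner (u : Lp ℝ 2 μ) : inner ℝ u e = ∫ x, u x ∂μ := by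
    rw [real_inner_comm, L2.inner_indicatorConstLp_one, setIntegral_univ]
  have he : ‖e‖ = 1 := by
    rw [norm_indicatorConstLp two_ne_zero ENNReal.ofNat_ne_top]
    simp
  have hUe : Lp.compMeasurePreservingₗᵢ ℝ T hT e = e :=
    Lp.indicatorConstLp_compMeasurePreserving .univ (measure_ne_top μ _) 1 hT
  rw [← hinner, ← hinner]
  refine tendsto_inner_pow_of_angle he hUe cylinderFunctions_mono
    (fun m u => compMeasurePreserving_mem_cylinderFunctions hT) (NNReal.coe_pos.2 hc) ?_
    (fun δ hδ => hS.exists_norm_pow_sub_le hSμ hT hκ f hδ) g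
  intro m l u hu v hv
  rw [compMeasurePreservingₗᵢ_pow, hinner, hinner]
  exact h.angle hT hκ hu hv

theorem QuasiBernoulli.tendsto_measure_preimage_inter [PseudoMetricSpace X] [BorelSpace X]
    [WeaklyLocallyCompactSpace X] [μ.Regular] [IsProbabilityMeasure μ] [Countable ι]
    [MeasurableSpace ι] [MeasurableSingletonClass ι] {c : ℝ≥0} (hc : 0 < c)
    (h : QuasiBernoulli T κ c μ) (hT : MeasurePreserving T μ μ) (hκ : Measurable κ) {S : Set X}
    (hS : IsGenerating T κ S) (hSμ : ∀ᵐ x ∂μ, x ∈ S) {A B : Set X} (hA : MeasurableSet A)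
    (hB : MeasurableSet B) :
    Tendsto (fun n => μ (T^[n] ⁻¹' A ∩ B)) atTop (nhds (μ A * μ B)) := by
  have hreal := h.tendsto_inner hc hT hκ hS hSμ (indicatorConstLp 2 hA (measure_ne_top μ A) 1)
    (indicatorConstLp 2 hB (measure_ne_top μ B) 1)
  rw [integral_indicatorConstLp, integral_indicatorConstLp, smul_eq_mul, smul_eq_mul, mul_one,
    mul_one] at hreal
  simp only [inner_compMeasurePreserving_pow_indicatorConstLp, measureReal_def,
    ← ENNReal.toReal_mul] at hreal
  exact (ENNReal.tendsto_toReal_iff (fun n => measure_ne_top μ _)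
    (ENNReal.mul_ne_top (measure_ne_top μ _) (measure_ne_top μ _))).1 hreal

end QuasiBernoulli

section Continuant

open Finset

/-- The pivots of Gaussian elimination for the tridiagonal matrix with diagonal entries `b j` and
off-diagonal entries `1`. -/
noncomputable def pivot (b : ℕ → ℝ) : ℕ → ℝ
  | 0 => b 0
  | j + 1 => b (j + 1) - (pivot b j)⁻¹

/-- The determinant of the leading `n × n` block of the tridiagonal matrix with diagonal entries
`b j` and off-diagonal entries `1`, as the product of its pivots. -/
noncomputable def continuant (b : ℕ → ℝ) (n : ℕ) : ℝ := ∏ j ∈ range n, pivot b j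

theorem continuant_succ (b : ℕ → ℝ) (n : ℕ) :
    continuant b (n + 1) = continuant b n * pivot b n :=
  prod_range_succ _ n

variable {b b' : ℕ → ℝ} {L : ℝ}

theorem half_le_pivot (hL : 2 ≤ L) (hb : ∀ j, L ≤ b j) (j : ℕ) : L / 2 ≤ pivot b j := by
  induction j with
  | zero => exact (half_le_self (by linarith)).trans (hb 0)
  | succ j ih =>
    have : (pivot b j)⁻¹ ≤ 1 := inv_le_one_of_one_le₀ (by linarith)
    rw [pivot]
    linarith [hb (j + 1)]

theorem pivot_pos (hb : ∀ j, 2 ≤ b j) (j : ℕ) : 0 < pivot b j := by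
  linarith [half_le_pivot le_rfl hb j]

theorem continuant_pos (hb : ∀ j, 2 ≤ b j) (n : ℕ) : 0 < continuant b n :=
  prod_pos fun j _ => pivot_pos hb j

theorem pivot_add_le (hb : ∀ j, 2 ≤ b j) (m j : ℕ) :
    pivot b (m + j) ≤ pivot (fun i => b (m + i)) j := by
  induction j with
  | zero =>
    cases m with
    | zero => rfl
    | succ m => exact sub_le_self _ (inv_nonneg.2 (pivot_pos hb m).le)
  | succ j ih => exact sub_le_sub_left (inv_anti₀ (pivot_pos hb _) ih) _

theorem continuant_add_le (hb : ∀ j, 2 ≤ b j) (m l : ℕ) :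
    continuant b (m + l) ≤ continuant b m * continuant (fun i => b (m + i)) l := by
  rw [continuant, prod_range_add]
  exact mul_le_mul_of_nonneg_left
    (prod_le_prod (fun j _ => (pivot_pos hb _).le) fun j _ => pivot_add_le hb m j)
    (continuant_pos hb m).le

theorem abs_eq_continuant_mul_abs {σ : ℝ} (hσ : |σ| = 1) (hb : ∀ j, 2 ≤ b j) {d : ℕ → ℝ} {n : ℕ}
    (h0 : d 0 = 0) (hd : ∀ j < n, d (j + 2) = σ * b j * d (j + 1) - d j) :
    |d (n + 1)| = continuant b n * |d 1| := by
  have hσσ : σ * σ = 1 := by rw [← abs_mul_abs_self, hσ, mul_one]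
  have hstep : ∀ j < n, d (j + 2) = σ * pivot b j * d (j + 1) := by
    intro j
    induction j with
    | zero => intro hj; rw [hd 0 hj, h0, sub_zero]; rfl
    | succ j ih =>
      intro hj
      have hdj : d (j + 1) = σ * (pivot b j)⁻¹ * d (j + 2) := by
        rw [ih (by omega)]
        linear_combination (-(1 : ℝ)) * d (j + 1) * hσσ
          - d (j + 1) * σ * σ * mul_inv_cancel₀ (pivot_pos hb j).ne'
      rw [hd _ hj, pivot, hdj]
      ring
  induction n with
  | zero => simp [continuant]
  | succ n ih =>
    rw [hstep n (by omega), abs_mul, abs_mul, hσ, one_mul, abs_of_pos (pivot_pos hb n),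
      ih (fun j hj => hd j (by omega)) (fun j hj => hstep j (by omega)), continuant_succ]
    ring

theorem inv_pivot_le (hL : 2 ≤ L) (hb : ∀ j, L ≤ b j) (j : ℕ) :
    (pivot b j)⁻¹ ≤ (2 / L) ^ 2 * pivot b (j + 1) :=
  calc (pivot b j)⁻¹ ≤ (L / 2)⁻¹ := inv_anti₀ (by linarith) (half_le_pivot hL hb j)
    _ = (2 / L) ^ 2 * (L / 2) := by field_simp
    _ ≤ _ := mul_le_mul_of_nonneg_left (half_le_pivot hL hb (j + 1)) (sq_nonneg _)

theorem sub_inv_le_exp_mul_sub_inv {β β' t t' α Δ κ : ℝ} (hκ : 0 ≤ κ) (hα : 0 ≤ α) (hΔ : 0 ≤ Δ)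
    (hβ : β ≤ exp α * β') (ht : 0 < t) (htt' : t ≤ exp Δ * t') (ht' : 0 < t')
    (hβt' : t'⁻¹ ≤ κ * (β' - t'⁻¹)) :
    β - t⁻¹ ≤ exp ((1 + κ) * α + κ * Δ) * (β' - t'⁻¹) := by
  have ht'inv : 0 < t'⁻¹ := inv_pos.2 ht'
  have hpos : 0 < β' - t'⁻¹ := pos_of_mul_pos_right (ht'inv.trans_le hβt') hκ
  have hexp : 1 - exp (-(Δ + α)) ≤ Δ + α := by linarith [add_one_le_exp (-(Δ + α))]
  calc β - t⁻¹ ≤ exp α * β' - (exp Δ * t')⁻¹ := sub_le_sub hβ (inv_anti₀ ht htt')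
    _ = exp α * ((β' - t'⁻¹) + (1 - exp (-(Δ + α))) * t'⁻¹) := by
        rw [mul_inv, ← exp_neg, neg_add, exp_add]
        have : exp α * exp (-α) = 1 := by rw [← exp_add, add_neg_cancel, exp_zero]
        linear_combination exp (-Δ) * t'⁻¹ * this
    _ ≤ exp α * ((β' - t'⁻¹) + (Δ + α) * (κ * (β' - t'⁻¹))) := by gcongr
    _ = exp α * (κ * (Δ + α) + 1) * (β' - t'⁻¹) := by ring
    _ ≤ exp α * exp (κ * (Δ + α)) * (β' - t'⁻¹) := by
        gcongr
        exact add_one_le_exp _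
    _ = _ := by rw [← exp_add]; ring_nf

-- The slack `κ / (1 - κ) * Δ` absorbs the error that the last pivot passes on to the next one.
theorem exists_continuant_succ_le_exp_mul {κ : ℝ} (hκ0 : 0 ≤ κ) (hκ1 : κ < 1) (hb : ∀ j, 2 ≤ b j)
    (hb' : ∀ j, 2 ≤ b' j) (hκ : ∀ j, (pivot b' j)⁻¹ ≤ κ * pivot b' (j + 1)) {α : ℕ → ℝ}
    (hα : ∀ j, 0 ≤ α j) {n : ℕ} (h : ∀ j < n + 1, b j ≤ exp (α j) * b' j) :
    ∃ Δ, 0 ≤ Δ ∧ pivot b n ≤ exp Δ * pivot b' n ∧ continuant b (n + 1) ≤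
      exp ((1 + κ) / (1 - κ) * ∑ j ∈ range (n + 1), α j - κ / (1 - κ) * Δ) *
        continuant b' (n + 1) := by
  have hκ' : 1 - κ ≠ 0 := by linarith
  induction n with
  | zero =>
    refine ⟨(1 + κ) * α 0, by have := hα 0; positivity, ?_, ?_⟩
    · refine (h 0 zero_lt_one).trans (mul_le_mul_of_nonneg_right (exp_le_exp.2 ?_) ?_)
      · linarith [mul_nonneg hκ0 (hα 0)]
      · linarith [hb' 0]
    · rw [continuant, continuant, prod_range_one, prod_range_one, sum_range_one]
      refine (h 0 zero_lt_one).trans (mul_le_mul_of_nonneg_right (exp_le_exp.2 ?_) ?_)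
      · have : (1 + κ) / (1 - κ) * α 0 - κ / (1 - κ) * ((1 + κ) * α 0) = (1 + κ) * α 0 := by
          field_simp
        linarith [mul_nonneg hκ0 (hα 0)]
      · exact (pivot_pos hb' 0).le
  | succ n ih =>
    obtain ⟨Δ, hΔ, hpivot, hle⟩ := ih fun j hj => h j (by omega)
    have hstep : pivot b (n + 1) ≤ exp ((1 + κ) * α (n + 1) + κ * Δ) * pivot b' (n + 1) :=
      sub_inv_le_exp_mul_sub_inv hκ0 (hα (n + 1)) hΔ (h (n + 1) (by omega)) (pivot_pos hb n) hpivot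
        (pivot_pos hb' n) (hκ n)
    refine ⟨(1 + κ) * α (n + 1) + κ * Δ, by have := hα (n + 1); positivity, hstep, ?_⟩
    rw [continuant_succ b, continuant_succ b']
    refine (mul_le_mul hle hstep (pivot_pos hb _).le
      (mul_nonneg (exp_pos _).le (continuant_pos hb' _).le)).trans_eq ?_
    rw [sum_range_succ _ (n + 1), mul_mul_mul_comm, ← exp_add]
    congr 2
    field_simp
    ring

theorem continuant_le_exp_mul {κ : ℝ} (hκ0 : 0 ≤ κ) (hκ1 : κ < 1) (hb : ∀ j, 2 ≤ b j)
    (hb' : ∀ j, 2 ≤ b' j) (hκ : ∀ j, (pivot b' j)⁻¹ ≤ κ * pivot b' (j + 1)) {α : ℕ → ℝ}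
    (hα : ∀ j, 0 ≤ α j) {n : ℕ} (h : ∀ j < n, b j ≤ exp (α j) * b' j) :
    continuant b n ≤ exp ((1 + κ) / (1 - κ) * ∑ j ∈ range n, α j) * continuant b' n := by
  cases n with
  | zero => simp [continuant]
  | succ n =>
    obtain ⟨Δ, hΔ, -, hle⟩ := exists_continuant_succ_le_exp_mul hκ0 hκ1 hb hb' hκ hα h
    refine hle.trans (mul_le_mul_of_nonneg_right ?_ (continuant_pos hb' _).le)
    exact exp_le_exp.2 (sub_le_self _ (mul_nonneg (div_nonneg hκ0 (by linarith)) hΔ))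

end Continuant

section FullBranch

open scoped NNReal

/-- A full, uniformly expanding branch with bounded distortion: `f` maps `(-1/2, 1/2)` onto `ℝ`, its
inverse branch `inv` has derivative `σ * ρ` with a constant sign `σ`, a contraction rate `ρ ≤ L⁻¹`
and a Lipschitz `log ρ`. Nothing is asked of `f` outside `(-1/2, 1/2)`. -/
structure FullBranch (f : ℝ → ℝ) where
  inv : ℝ → ℝ
  ρ : ℝ → ℝ
  σ : ℝ
  L : ℝ
  C : ℝ≥0
  abs_σ : |σ| = 1
  two_lt : 2 < L
  hasDerivAt_inv : ∀ u, HasDerivAt inv (σ * ρ u) u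
  ρ_pos : ∀ u, 0 < ρ u
  ρ_le : ∀ u, ρ u ≤ L⁻¹
  lipschitzWith_log : LipschitzWith C fun u => log (ρ u)
  abs_inv_lt : ∀ u, |inv u| < 1 / 2
  inv_apply : ∀ x, |x| < 1 / 2 → inv (f x) = x
  apply_inv : ∀ u, f (inv u) = u

namespace FullBranch

variable {f : ℝ → ℝ} (D : FullBranch f) {x y x' y' : ℝ}

theorem L_pos : 0 < D.L := two_pos.trans D.two_lt

theorem two_div_nonneg : 0 ≤ 2 / D.L := (div_pos two_pos D.L_pos).le

theorem two_div_lt_one : 2 / D.L < 1 := (div_lt_one D.L_pos).2 D.two_lt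

theorem continuous_ρ : Continuous D.ρ := by
  simpa only [exp_log (D.ρ_pos _)] using D.lipschitzWith_log.continuous.rexp

theorem ρ_le_exp_mul {u v η : ℝ} (h : |u - v| ≤ η) : D.ρ u ≤ exp (D.C * η) * D.ρ v := by
  rw [← log_le_log_iff (D.ρ_pos u) (mul_pos (exp_pos _) (D.ρ_pos v)),
    log_mul (exp_pos _).ne' (D.ρ_pos v).ne', log_exp, ← sub_le_iff_le_add]
  calc log (D.ρ u) - log (D.ρ v) ≤ |log (D.ρ u) - log (D.ρ v)| := le_abs_self _
    _ ≤ D.C * |u - v| := D.lipschitzWith_log.dist_le_mul u v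
    _ ≤ D.C * η := by gcongr

/-- The expansion factor `|f x - f y| / |x - y|`, written as the inverse of the mean of `ρ` over the
segment from `f x` to `f y` so that it also makes sense on the diagonal. -/
noncomputable def expansion (x y : ℝ) : ℝ := (∫ t in (0 : ℝ)..1, D.ρ (f x + t * (f y - f x)))⁻¹

theorem intervalIntegrable_ρ (u v : ℝ) :
    IntervalIntegrable (fun t => D.ρ (u + t * (v - u))) volume 0 1 :=
  (D.continuous_ρ.comp (by fun_prop)).intervalIntegrable 0 1

theorem integral_ρ_pos (u v : ℝ) : 0 < ∫ t in (0 : ℝ)..1, D.ρ (u + t * (v - u)) :=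
  intervalIntegral.intervalIntegral_pos_of_pos (D.intervalIntegrable_ρ u v) (fun _ => D.ρ_pos _)
    one_pos

theorem le_expansion (x y : ℝ) : D.L ≤ D.expansion x y := by
  refine le_inv_of_le_inv₀ (D.integral_ρ_pos _ _) ?_
  calc ∫ t in (0 : ℝ)..1, D.ρ (f x + t * (f y - f x)) ≤ ∫ _ in (0 : ℝ)..1, D.L⁻¹ :=
        intervalIntegral.integral_mono_on zero_le_one (D.intervalIntegrable_ρ _ _)
          intervalIntegrable_const fun _ _ => D.ρ_le _
    _ = D.L⁻¹ := by simp

theorem inv_sub_inv (u v : ℝ) :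
    D.inv u - D.inv v = D.σ * (∫ t in (0 : ℝ)..1, D.ρ (u + t * (v - u))) * (u - v) := by
  have h := intervalIntegral.integral_unitInterval_deriv_eq_sub (f := D.inv) (z₀ := u) (z₁ := v - u)
    (f' := fun u => D.σ * D.ρ u) (by have := D.continuous_ρ; fun_prop) fun t _ => D.hasDerivAt_inv _
  simp only [smul_eq_mul, add_sub_cancel, intervalIntegral.integral_const_mul] at h
  linear_combination h

theorem apply_sub_apply (hx : |x| < 1 / 2) (hy : |y| < 1 / 2) :
    f x - f y = D.σ * D.expansion x y * (x - y) := by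
  have h := D.inv_sub_inv (f x) (f y)
  have hσ : D.σ * D.σ = 1 := by rw [← abs_mul_abs_self, D.abs_σ, mul_one]
  have hI := mul_inv_cancel₀ (D.integral_ρ_pos (f x) (f y)).ne'
  rw [D.inv_apply x hx, D.inv_apply y hy] at h
  rw [h, expansion]
  linear_combination -(f x - f y) * (hσ + D.σ * D.σ * hI)

theorem abs_sub_le_div (hx : |x| < 1 / 2) (hy : |y| < 1 / 2) : |x - y| ≤ |f x - f y| / D.L := by
  rw [le_div_iff₀' D.L_pos, D.apply_sub_apply hx hy, abs_mul, abs_mul, D.abs_σ, one_mul]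
  gcongr
  exact (D.le_expansion x y).trans (le_abs_self _)

theorem expansion_le_exp_mul {η : ℝ} (hx : |f x - f x'| ≤ η) (hy : |f y - f y'| ≤ η) :
    D.expansion x y ≤ exp (D.C * η) * D.expansion x' y' := by
  have hle : ∫ t in (0 : ℝ)..1, D.ρ (f x' + t * (f y' - f x')) ≤
      exp (D.C * η) * ∫ t in (0 : ℝ)..1, D.ρ (f x + t * (f y - f x)) := by
    rw [← intervalIntegral.integral_const_mul]
    refine intervalIntegral.integral_mono_on zero_le_one (D.intervalIntegrable_ρ _ _)
      ((D.intervalIntegrable_ρ _ _).const_mul _) fun t ht => D.ρ_le_exp_mul ?_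
    calc |f x' + t * (f y' - f x') - (f x + t * (f y - f x))|
          = |(1 - t) * (f x' - f x) + t * (f y' - f y)| := by ring_nf
        _ ≤ |(1 - t) * (f x' - f x)| + |t * (f y' - f y)| := abs_add_le _ _
        _ = (1 - t) * |f x - f x'| + t * |f y - f y'| := by
          rw [abs_mul, abs_mul, abs_of_nonneg (sub_nonneg.2 ht.2), abs_of_nonneg ht.1,
            abs_sub_comm (f x'), abs_sub_comm (f y')]
        _ ≤ (1 - t) * η + t * η := add_le_add (mul_le_mul_of_nonneg_left hx (sub_nonneg.2 ht.2))
          (mul_le_mul_of_nonneg_left hy ht.1)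
        _ = η := by ring
  rw [expansion, expansion, inv_le_iff_one_le_mul₀ (D.integral_ρ_pos _ _), mul_right_comm,
    ← div_eq_mul_inv, one_le_div (D.integral_ρ_pos _ _)]
  exact hle

theorem dist_inv_le (u v : ℝ) : dist (D.inv u) (D.inv v) ≤ D.L⁻¹ * dist u v := by
  have h := D.abs_sub_le_div (D.abs_inv_lt u) (D.abs_inv_lt v)
  rwa [D.apply_inv, D.apply_inv, div_eq_inv_mul] at h

end FullBranch

/-- The sequence `q` is, in its first `n + 2` terms, a piece of an orbit in `(-1/2, 1/2)` of the
second order recursion `q (j + 2) ≡ f (q (j + 1)) - q j` modulo `1`, with integer parts `a`. -/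
structure IsOrbitSegment (f : ℝ → ℝ) {n : ℕ} (a : Fin n → ℤ) (q : ℕ → ℝ) : Prop where
  abs_lt : ∀ j ≤ n + 1, |q j| < 1 / 2
  apply_eq : ∀ j : Fin n, f (q (j + 1)) = q j + q (j + 2) + a j

namespace IsOrbitSegment

variable {f : ℝ → ℝ} {n m l : ℕ} {a : Fin n → ℤ} {q q' x y x' y' z w : ℕ → ℝ}
  {α : Fin m → ℤ} {β : Fin l → ℤ}

theorem left (h : IsOrbitSegment f (Fin.append α β) q) : IsOrbitSegment f α q where
  abs_lt j hj := h.abs_lt j (by omega)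
  apply_eq j := by simpa using h.apply_eq (j.castAdd l)

theorem right (h : IsOrbitSegment f (Fin.append α β) q) :
    IsOrbitSegment f β fun j => q (m + j) where
  abs_lt j hj := h.abs_lt _ (by omega)
  apply_eq j := by simpa [add_assoc] using h.apply_eq (j.natAdd m)

theorem apply_sub_apply (hx : IsOrbitSegment f a x) (hy : IsOrbitSegment f a y) {j : ℕ}
    (hj : j < n) : f (x (j + 1)) - f (y (j + 1)) = (x j - y j) + (x (j + 2) - y (j + 2)) := by
  rw [hx.apply_eq ⟨j, hj⟩, hy.apply_eq ⟨j, hj⟩]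
  ring

variable (D : FullBranch f)
include D

theorem abs_sub_le_pow (hx : IsOrbitSegment f a x) (hy : IsOrbitSegment f a y) {k j : ℕ}
    (hkj : k ≤ j) (hjn : j + k ≤ n + 1) : |x j - y j| ≤ (2 / D.L) ^ k := by
  induction k generalizing j with
  | zero =>
    rw [pow_zero]
    linarith [abs_sub (x j) (y j), hx.abs_lt j hjn, hy.abs_lt j hjn]
  | succ k ih =>
    obtain ⟨i, rfl⟩ := Nat.exists_eq_add_of_le' (show 1 ≤ j by omega)
    calc |x (i + 1) - y (i + 1)| ≤ |f (x (i + 1)) - f (y (i + 1))| / D.L :=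
          D.abs_sub_le_div (hx.abs_lt _ (by omega)) (hy.abs_lt _ (by omega))
      _ ≤ ((2 / D.L) ^ k + (2 / D.L) ^ k) / D.L := by
          rw [hx.apply_sub_apply hy (by omega)]
          exact div_le_div_of_nonneg_right ((abs_add_le _ _).trans
            (add_le_add (ih (by omega) (by omega)) (ih (by omega) (by omega)))) D.L_pos.le
      _ = (2 / D.L) ^ (k + 1) := by ring

theorem abs_apply_sub_apply_le (hx : IsOrbitSegment f a x) (hy : IsOrbitSegment f a y) {j : ℕ}
    (hj : j < n) :
    |f (x (j + 1)) - f (y (j + 1))| ≤ 2 * ((2 / D.L) ^ j + (2 / D.L) ^ (n - 1 - j)) := by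
  have hθ := D.two_div_nonneg
  have h : ∀ k, k ≤ j → j + k < n → |f (x (j + 1)) - f (y (j + 1))| ≤ 2 * (2 / D.L) ^ k := by
    intro k hkj hkn
    rw [hx.apply_sub_apply hy hj, two_mul]
    exact (abs_add_le _ _).trans (add_le_add (hx.abs_sub_le_pow D hy hkj (by omega))
      (hx.abs_sub_le_pow D hy (by omega) (by omega)))
  rcases le_total j (n - 1 - j) with hle | hle
  · exact (h j le_rfl (by omega)).trans (by gcongr; exact le_add_of_nonneg_right (by positivity))
  · exact (h _ hle (by omega)).trans (by gcongr; exact le_add_of_nonneg_left (by positivity))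

end IsOrbitSegment

namespace FullBranch

variable {f : ℝ → ℝ} (D : FullBranch f)

/-- The map on `n + 2` consecutive terms whose fixed points are the orbit segments with coding `a`
and endpoints `s` and `t`. -/
noncomputable def segmentMap {n : ℕ} (a : Fin n → ℤ) (s t : ℝ) (Q : Fin (n + 2) → ℝ) :
    Fin (n + 2) → ℝ :=
  Fin.cons s (Fin.snoc (fun j => D.inv (Q j.castSucc.castSucc + Q j.succ.succ + a j)) t)

theorem abs_segmentMap_lt {n : ℕ} (a : Fin n → ℤ) {s t : ℝ} (hs : |s| < 1 / 2) (ht : |t| < 1 / 2)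
    (Q : Fin (n + 2) → ℝ) (i : Fin (n + 2)) : |D.segmentMap a s t Q i| < 1 / 2 := by
  cases i using Fin.cases with
  | zero => exact hs
  | succ i =>
    cases i using Fin.lastCases with
    | last => simpa [segmentMap] using ht
    | cast i => simpa [segmentMap] using D.abs_inv_lt _

theorem contractingWith_segmentMap {n : ℕ} (a : Fin n → ℤ) (s t : ℝ) :
    ContractingWith (toNNReal (2 / D.L)) (D.segmentMap a s t) := by
  refine ⟨toNNReal_lt_one.2 D.two_div_lt_one, LipschitzWith.of_dist_le_mul fun Q Q' => ?_⟩
  have hθ := D.two_div_nonneg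
  rw [coe_toNNReal _ hθ, dist_pi_le_iff (by positivity)]
  intro i
  cases i using Fin.cases with
  | zero => simpa [segmentMap] using by positivity
  | succ i =>
    cases i using Fin.lastCases with
    | last => simpa [segmentMap] using by positivity
    | cast i =>
      simp only [segmentMap, Fin.cons_succ, Fin.snoc_castSucc]
      calc _ ≤ D.L⁻¹ * dist (Q i.castSucc.castSucc + Q i.succ.succ + a i)
            (Q' i.castSucc.castSucc + Q' i.succ.succ + a i) := D.dist_inv_le _ _
        _ ≤ D.L⁻¹ * (dist Q Q' + dist Q Q') := by
            have := inv_nonneg.2 D.L_pos.le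
            rw [dist_add_right]
            gcongr
            exact (dist_add_add_le _ _ _ _).trans
              (add_le_add (dist_le_pi_dist _ _ _) (dist_le_pi_dist _ _ _))
        _ = 2 / D.L * dist Q Q' := by ring

include D in
theorem exists_isOrbitSegment {n : ℕ} (a : Fin n → ℤ) {s t : ℝ} (hs : |s| < 1 / 2)
    (ht : |t| < 1 / 2) : ∃ q, IsOrbitSegment f a q ∧ q 0 = s ∧ q (n + 1) = t := by
  obtain ⟨Q, hQ⟩ : ∃ Q, D.segmentMap a s t Q = Q :=
    ⟨_, (D.contractingWith_segmentMap a s t).fixedPoint_isFixedPt⟩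
  obtain ⟨q, hq⟩ : ∃ q : ℕ → ℝ, ∀ i : Fin (n + 2), q i = Q i :=
    ⟨fun i => Q (Fin.ofNat (n + 2) i), fun i => congrArg Q (Fin.ofNat_val_eq_self i)⟩
  refine ⟨q, ⟨fun j hj => ?_, fun j => ?_⟩, ?_, ?_⟩
  · rw [hq ⟨j, by omega⟩, ← hQ]
    exact D.abs_segmentMap_lt a hs ht Q _
  · have hj : q (j + 1) = D.inv (q j + q (j + 2) + a j) := by
      simpa [segmentMap, ← hq] using (congrFun hQ j.castSucc.succ).symm
    rw [hj, D.apply_inv]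
  · exact (hq 0).trans (congrFun hQ 0).symm
  · simpa [segmentMap, ← hq] using (congrFun hQ (Fin.last n).succ).symm

/-- The continuant of the expansion factors along two sequences: it is the factor by which `n` steps
of the recursion expand the distance of two orbit segments with the same initial term. -/
noncomputable def orbitContinuant (x y : ℕ → ℝ) (n : ℕ) : ℝ :=
  continuant (fun j => D.expansion (x (j + 1)) (y (j + 1))) n

/-- The distortion constant of the continuants along orbit segments with the same coding. -/
noncomputable def distortion : ℝ :=
  exp ((1 + (2 / D.L) ^ 2) / (1 - (2 / D.L) ^ 2) * (4 * D.C * (1 - 2 / D.L)⁻¹))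

theorem two_le_expansion (x y : ℝ) : 2 ≤ D.expansion x y :=
  D.two_lt.le.trans (D.le_expansion x y)

theorem orbitContinuant_pos (x y : ℕ → ℝ) (n : ℕ) : 0 < D.orbitContinuant x y n :=
  continuant_pos (fun _ => D.two_le_expansion _ _) n

theorem distortion_pos : 0 < D.distortion := exp_pos _

end FullBranch

namespace IsOrbitSegment

variable {f : ℝ → ℝ} (D : FullBranch f) {n m l : ℕ} {a : Fin n → ℤ} {x y x' y' z w : ℕ → ℝ}
  {α : Fin m → ℤ} {β : Fin l → ℤ}

theorem orbitContinuant_le (hx : IsOrbitSegment f a x) (hy : IsOrbitSegment f a y)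
    (hx' : IsOrbitSegment f a x') (hy' : IsOrbitSegment f a y') :
    D.orbitContinuant x y n ≤ D.distortion * D.orbitContinuant x' y' n := by
  have hθ0 := D.two_div_nonneg
  have hθ1 := D.two_div_lt_one
  have hgeom : ∑ j ∈ Finset.range n, (2 / D.L) ^ j ≤ (1 - 2 / D.L)⁻¹ := by
    rw [← tsum_geometric_of_lt_one hθ0 hθ1]
    exact (summable_geometric_of_lt_one hθ0 hθ1).sum_le_tsum _ fun _ _ => by positivity
  have hsum : ∑ j ∈ Finset.range n, D.C * (2 * ((2 / D.L) ^ j + (2 / D.L) ^ (n - 1 - j))) ≤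
      4 * D.C * (1 - 2 / D.L)⁻¹ := by
    rw [← Finset.mul_sum, ← Finset.mul_sum, Finset.sum_add_distrib,
      Finset.sum_range_reflect (fun j => (2 / D.L) ^ j) n]
    linarith [mul_le_mul_of_nonneg_left hgeom D.C.coe_nonneg]
  have hθsq : (2 / D.L) ^ 2 < 1 := pow_lt_one₀ hθ0 hθ1 two_ne_zero
  refine (continuant_le_exp_mul (sq_nonneg _) hθsq (fun _ => D.two_le_expansion _ _)
    (fun _ => D.two_le_expansion _ _) (inv_pivot_le D.two_lt.le fun _ => D.le_expansion _ _)
    (fun j => by positivity) fun j hj => D.expansion_le_exp_mul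
      (hx.abs_apply_sub_apply_le D hx' hj) (hy.abs_apply_sub_apply_le D hy' hj)).trans ?_
  refine mul_le_mul_of_nonneg_right (exp_le_exp.2 ?_) (D.orbitContinuant_pos x' y' n).le
  exact mul_le_mul_of_nonneg_left hsum (div_nonneg (by positivity) (by linarith))

theorem abs_sub_last_eq (hx : IsOrbitSegment f a x) (hy : IsOrbitSegment f a y) (h0 : x 0 = y 0) :
    |x (n + 1) - y (n + 1)| = D.orbitContinuant x y n * |x 1 - y 1| := by
  refine abs_eq_continuant_mul_abs D.abs_σ (fun _ => D.two_le_expansion _ _)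
    (d := fun j => x j - y j) (sub_eq_zero.2 h0) fun j hj => ?_
  rw [← D.apply_sub_apply (hx.abs_lt _ (by omega)) (hy.abs_lt _ (by omega)),
    hx.apply_sub_apply hy hj]
  ring

theorem abs_sub_one_le (hx : IsOrbitSegment f a x) (hy : IsOrbitSegment f a y)
    (hz : IsOrbitSegment f a z) (h0 : x 0 = y 0) :
    |x 1 - y 1| ≤ D.distortion / D.orbitContinuant z z n := by
  have hlast : |x (n + 1) - y (n + 1)| ≤ 1 := hx.abs_sub_le_pow D hy (Nat.zero_le _) le_rfl
  rw [le_div_iff₀ (D.orbitContinuant_pos z z n)]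
  calc |x 1 - y 1| * D.orbitContinuant z z n
      ≤ |x 1 - y 1| * (D.distortion * D.orbitContinuant x y n) := by
        gcongr
        exact hz.orbitContinuant_le D hz hx hy
    _ = D.distortion * |x (n + 1) - y (n + 1)| := by rw [hx.abs_sub_last_eq D hy h0]; ring
    _ ≤ D.distortion := mul_le_of_le_one_right D.distortion_pos.le hlast

theorem abs_sub_last_le (hx : IsOrbitSegment f (Fin.append α β) x)
    (hy : IsOrbitSegment f (Fin.append α β) y) (hz : IsOrbitSegment f α z)
    (hw : IsOrbitSegment f β w) (h0 : x 0 = y 0) :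
    |x (m + l + 1) - y (m + l + 1)| ≤
      D.distortion ^ 2 * (D.orbitContinuant z z m * D.orbitContinuant w w l) * |x 1 - y 1| := by
  have hright := hx.right.orbitContinuant_le D hy.right hw hw
  have hz0 := (D.orbitContinuant_pos z z m).le
  have hS := D.distortion_pos.le
  rw [hx.abs_sub_last_eq D hy h0]
  gcongr
  calc D.orbitContinuant x y (m + l)
      ≤ D.orbitContinuant x y m * D.orbitContinuant (fun j => x (m + j)) (fun j => y (m + j)) l :=
        continuant_add_le (fun _ => D.two_le_expansion _ _) m l
    _ ≤ (D.distortion * D.orbitContinuant z z m) * (D.distortion * D.orbitContinuant w w l) :=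
        mul_le_mul (hx.left.orbitContinuant_le D hy.left hz hz) hright
          (D.orbitContinuant_pos _ _ l).le (mul_nonneg hS hz0)
    _ = D.distortion ^ 2 * (D.orbitContinuant z z m * D.orbitContinuant w w l) := by ring

end IsOrbitSegment

/-- The second terms of the orbit segments with coding `a` and first term `s`; it is the fiber over
`s` of the cylinder set of the word `a`. -/
def orbitFiber (f : ℝ → ℝ) {n : ℕ} (a : Fin n → ℤ) (s : ℝ) : Set ℝ :=
  {u | ∃ q, IsOrbitSegment f a q ∧ q 0 = s ∧ q 1 = u}

theorem volume_orbitFiber_le {f : ℝ → ℝ} (D : FullBranch f) {n : ℕ} {a : Fin n → ℤ} {z : ℕ → ℝ}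
    (hz : IsOrbitSegment f a z) (s : ℝ) :
    volume (orbitFiber f a s) ≤ ENNReal.ofReal (D.distortion / D.orbitContinuant z z n) := by
  refine (volume_le_diam _).trans (Metric.ediam_le ?_)
  rintro _ ⟨x, hx, hx0, rfl⟩ _ ⟨y, hy, hy0, rfl⟩
  rw [edist_dist]
  exact ENNReal.ofReal_le_ofReal (hx.abs_sub_one_le D hy hz (hx0.trans hy0.symm))

theorem le_volume_orbitFiber {f : ℝ → ℝ} (D : FullBranch f) {m l : ℕ} {α : Fin m → ℤ}
    {β : Fin l → ℤ} {z w : ℕ → ℝ} (hz : IsOrbitSegment f α z) (hw : IsOrbitSegment f β w) {s : ℝ}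
    (hs : |s| < 1 / 2) :
    ENNReal.ofReal (D.distortion ^ 2 * (D.orbitContinuant z z m * D.orbitContinuant w w l))⁻¹ ≤
      volume (orbitFiber f (Fin.append α β) s) := by
  set R := D.distortion ^ 2 * (D.orbitContinuant z z m * D.orbitContinuant w w l)
  have hR : 0 < R := mul_pos (pow_pos D.distortion_pos 2)
    (mul_pos (D.orbitContinuant_pos z z m) (D.orbitContinuant_pos w w l))
  choose q hq hq0 hqt using fun t : Set.Ioo (-(1 : ℝ) / 2) (1 / 2) =>
    D.exists_isOrbitSegment (Fin.append α β) hs (t := t) (abs_lt.2 ⟨by linarith [t.2.1], t.2.2⟩)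
  have hanti : AntilipschitzWith R.toNNReal fun t => q t 1 := by
    refine AntilipschitzWith.of_le_mul_dist fun t t' => ?_
    have h := (hq t).abs_sub_last_le D (hq t') hz hw ((hq0 t).trans (hq0 t').symm)
    rw [hqt, hqt] at h
    rwa [coe_toNNReal R hR.le]
  have hvol : volume (Set.Ioo (-(1 : ℝ) / 2) (1 / 2)) = 1 := by
    rw [volume_Ioo]
    norm_num
  have hle := hanti.le_hausdorffMeasure_image zero_le_one Set.univ
  rw [← isometry_subtype_coe.hausdorffMeasure_image (Or.inl zero_le_one), Set.image_univ,
    Subtype.range_coe, hausdorffMeasure_real, hvol, ENNReal.rpow_one, Set.image_univ] at hle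
  rw [ENNReal.ofReal_inv_of_pos hR]
  refine (ENNReal.inv_le_iff_le_mul (fun _ => (ENNReal.ofReal_pos.2 hR).ne')
    fun h => absurd h ENNReal.ofReal_ne_top).2 (hle.trans ?_)
  gcongr
  · rfl
  · exact Set.range_subset_iff.2 fun t => ⟨q t, hq t, hq0 t, rfl⟩

end FullBranch

section StandardMap

open scoped NNReal

theorem rmod_add_intCast (x : ℝ) (n : ℤ) : rmod (x + n) = rmod x := by
  rw [rmod, rmod, add_right_comm, Int.floor_add_intCast]
  push_cast
  ring

theorem floor_add_half_eq_zero {x : ℝ} (hx : |x| < 1 / 2) : ⌊x + 1 / 2⌋ = 0 :=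
  Int.floor_eq_zero_iff.2 ⟨by linarith [(abs_lt.1 hx).1], by linarith [(abs_lt.1 hx).2]⟩

theorem rmod_of_abs_lt {x : ℝ} (hx : |x| < 1 / 2) : rmod x = x := by
  rw [rmod, floor_add_half_eq_zero hx, Int.cast_zero, sub_zero]

theorem rmod_eq_equivIco (x : ℝ) :
    rmod x = AddCircle.equivIco (1 : ℝ) (-(1 : ℝ) / 2) (x : AddCircle (1 : ℝ)) := by
  have hcoe : (AddCircle.equivIco (1 : ℝ) (-(1 : ℝ) / 2) (x : AddCircle (1 : ℝ)) : ℝ) =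
      toIcoMod one_pos (-(1 : ℝ) / 2) x := rfl
  rw [hcoe, toIcoMod, toIcoDiv_eq_floor, rmod, zsmul_one, div_one, neg_div, sub_neg_eq_add]

theorem measurable_rmod : Measurable rmod :=
  measurable_id.sub
    (measurable_from_top.comp (Int.measurable_floor.comp (measurable_id.add_const _)))

/-- The uniform probability measure on `[-1/2, 1/2)`. -/
noncomputable def unifI : Measure ℝ := volume.restrict (Set.Ico (-(1 : ℝ) / 2) (1 / 2))

instance : IsProbabilityMeasure unifI :=
  ⟨by rw [unifI, Measure.restrict_apply_univ, volume_Ico]; norm_num⟩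

theorem unifSq_eq_prod : unifSq = unifI.prod unifI := by
  rw [unifSq, unitSq, unifI, Measure.prod_restrict, Measure.volume_eq_prod]

instance : IsProbabilityMeasure unifSq := unifSq_eq_prod ▸ inferInstance

instance : unifSq.Regular := by
  rw [unifSq]
  infer_instance

theorem ae_abs_lt_half : ∀ᵐ x ∂unifI, |x| < 1 / 2 := by
  rw [unifI, Measure.restrict_congr_set Ioo_ae_eq_Ico.symm]
  filter_upwards [ae_restrict_mem measurableSet_Ioo] with x hx
  exact abs_lt.2 ⟨by linarith [hx.1], hx.2⟩

theorem measurePreserving_rmod : MeasurePreserving rmod unifI unifI := by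
  refine ⟨measurable_rmod, ?_⟩
  rw [Measure.map_congr (ae_abs_lt_half.mono fun x hx => rmod_of_abs_lt hx), Measure.map_id']

theorem measurePreserving_mk_unifI :
    MeasurePreserving (fun x : ℝ => (x : AddCircle (1 : ℝ))) unifI volume := by
  have h := AddCircle.measurePreserving_mk 1 (-(1 : ℝ) / 2)
  rw [show -(1 : ℝ) / 2 + 1 = 1 / 2 by norm_num] at h
  rwa [unifI, Measure.restrict_congr_set Ico_ae_eq_Ioc]

theorem measurePreserving_equivIco :
    MeasurePreserving (fun y => (AddCircle.equivIco (1 : ℝ) (-(1 : ℝ) / 2) y : ℝ)) volume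
      unifI := by
  have hmeas : Measurable fun y => (AddCircle.equivIco (1 : ℝ) (-(1 : ℝ) / 2) y : ℝ) :=
    measurable_subtype_coe.comp (AddCircle.measurableEquivIco (1 : ℝ) (-(1 : ℝ) / 2)).measurable
  refine ⟨hmeas, ?_⟩
  rw [← measurePreserving_mk_unifI.map_eq,
    Measure.map_map hmeas measurePreserving_mk_unifI.measurable]
  simpa only [Function.comp_def, ← rmod_eq_equivIco] using measurePreserving_rmod.map_eq

theorem measurePreserving_rmod_sub (c : ℝ) :
    MeasurePreserving (fun x => rmod (c - x)) unifI unifI := by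
  simpa only [Function.comp_def, ← AddCircle.coe_sub, ← rmod_eq_equivIco] using
    (measurePreserving_equivIco.comp (Measure.measurePreserving_sub_left volume
      (c : AddCircle (1 : ℝ)))).comp measurePreserving_mk_unifI

variable {f : ℝ → ℝ}

/-- The standard map with potential derivative `f`, in the coordinates `(p, q)` of two consecutive
terms of the recursion `q (j + 2) ≡ f (q (j + 1)) - q j` modulo `1`. -/
noncomputable def standardMap (f : ℝ → ℝ) (x : ℝ × ℝ) : ℝ × ℝ := (rmod x.2, rmod (f x.2 - x.1))

/-- The integer removed by `rmod` in the second coordinate of `standardMap f x`; it codes the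
orbits of `standardMap f`. -/
noncomputable def standardDigit (f : ℝ → ℝ) (x : ℝ × ℝ) : ℤ := ⌊f x.2 - x.1 + 1 / 2⌋

/-- The points whose orbit stays off the boundary of the square. -/
def interiorOrbits (f : ℝ → ℝ) : Set (ℝ × ℝ) :=
  {x | ∀ j, |((standardMap f)^[j] x).1| < 1 / 2 ∧ |((standardMap f)^[j] x).2| < 1 / 2}

theorem measurable_standardDigit (hf : Measurable f) : Measurable (standardDigit f) :=
  Int.measurable_floor.comp (((hf.comp measurable_snd).sub measurable_fst).add_const _)

theorem measurePreserving_standardMap (hf : Measurable f) :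
    MeasurePreserving (standardMap f) unifSq unifSq := by
  have hskew : MeasurePreserving (fun y : ℝ × ℝ => (rmod y.1, rmod (f y.1 - y.2)))
      (unifI.prod unifI) (unifI.prod unifI) :=
    measurePreserving_rmod.skew_product (g := fun q p => rmod (f q - p))
      (measurable_rmod.comp ((hf.comp measurable_fst).sub measurable_snd))
      (ae_of_all _ fun q => (measurePreserving_rmod_sub (f q)).map_eq)
  rw [unifSq_eq_prod]
  exact hskew.comp Measure.measurePreserving_swap

theorem measurableSet_interiorOrbits (hf : Measurable f) : MeasurableSet (interiorOrbits f) := by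
  have hT := (measurePreserving_standardMap hf).measurable
  refine measurableSet_setOfPred.2 (Measurable.forall fun j => Measurable.and ?_ ?_)
  · exact measurableSet_setOfPred.1 (measurableSet_lt (hT.iterate j).fst.abs measurable_const)
  · exact measurableSet_setOfPred.1 (measurableSet_lt (hT.iterate j).snd.abs measurable_const)

theorem ae_mem_interiorOrbits (hf : Measurable f) : ∀ᵐ x ∂unifSq, x ∈ interiorOrbits f := by
  have hsq : ∀ᵐ y ∂unifSq, |y.1| < 1 / 2 ∧ |y.2| < 1 / 2 := by
    rw [unifSq_eq_prod]
    exact (Measure.quasiMeasurePreserving_fst.ae ae_abs_lt_half).and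
      (Measure.quasiMeasurePreserving_snd.ae ae_abs_lt_half)
  exact ae_all_iff.2 fun j =>
    ((measurePreserving_standardMap hf).iterate j).quasiMeasurePreserving.ae hsq

theorem iterate_standardMap_snd {x : ℝ × ℝ} (hx : x ∈ interiorOrbits f) (j : ℕ) :
    ((standardMap f)^[j] x).2 = ((standardMap f)^[j + 1] x).1 := by
  rw [Function.iterate_succ_apply', standardMap, rmod_of_abs_lt (hx j).2]

theorem isOrbitSegment_of_mem_interiorOrbits {x : ℝ × ℝ} (hx : x ∈ interiorOrbits f) (n : ℕ) :
    IsOrbitSegment f (word (standardMap f) (standardDigit f) n x)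
      fun j => ((standardMap f)^[j] x).1 where
  abs_lt j _ := (hx j).1
  apply_eq j := by
    rw [← iterate_standardMap_snd hx j, ← iterate_standardMap_snd hx (j + 1),
      Function.iterate_succ_apply']
    simp only [standardMap, rmod, word, standardDigit]
    ring

namespace IsOrbitSegment

variable {n : ℕ} {a : Fin n → ℤ} {q : ℕ → ℝ}

theorem iterate_standardMap (hq : IsOrbitSegment f a q) {j : ℕ} (hj : j ≤ n) :
    (standardMap f)^[j] (q 0, q 1) = (q j, q (j + 1)) := by
  induction j with
  | zero => rfl
  | succ j ih =>
    have hstep : f (q (j + 1)) - q j = q (j + 2) + a ⟨j, hj⟩ := by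
      rw [hq.apply_eq ⟨j, hj⟩]
      ring
    rw [Function.iterate_succ_apply', ih (by omega), standardMap, hstep, rmod_add_intCast,
      rmod_of_abs_lt (hq.abs_lt _ (by omega)), rmod_of_abs_lt (hq.abs_lt _ (by omega))]

theorem word_eq (hq : IsOrbitSegment f a q) :
    word (standardMap f) (standardDigit f) n (q 0, q 1) = a := by
  funext j
  have hstep : f (q (j + 1)) - q j + 1 / 2 = q (j + 2) + 1 / 2 + a j := by
    rw [hq.apply_eq j]
    ring
  rw [word, hq.iterate_standardMap j.2.le, standardDigit, hstep, Int.floor_add_intCast,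
    floor_add_half_eq_zero (hq.abs_lt _ (by omega)), zero_add]

end IsOrbitSegment

theorem isGenerating_interiorOrbits (D : FullBranch f) :
    IsGenerating (standardMap f) (standardDigit f) (interiorOrbits f) := by
  intro r hr
  obtain ⟨m, hm⟩ := exists_pow_lt_of_lt_one hr D.two_div_lt_one
  refine ⟨m, 2 * m, fun x hx y hy hxy => ?_⟩
  have hx' := isOrbitSegment_of_mem_interiorOrbits hx (2 * m)
  have hy' := isOrbitSegment_of_mem_interiorOrbits hy (2 * m)
  rw [← hxy] at hy'
  rw [Prod.dist_eq, max_lt_iff, iterate_standardMap_snd hx, iterate_standardMap_snd hy]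
  exact ⟨(hx'.abs_sub_le_pow D hy' le_rfl (by omega)).trans_lt hm,
    (hx'.abs_sub_le_pow D hy' (by omega) (by omega)).trans_lt hm⟩

theorem unifSq_cylinder_le (hf : Measurable f) (D : FullBranch f) {n : ℕ} {a : Fin n → ℤ}
    {z : ℕ → ℝ} (hz : IsOrbitSegment f a z) :
    unifSq (word (standardMap f) (standardDigit f) n ⁻¹' {a}) ≤
      ENNReal.ofReal (D.distortion / D.orbitContinuant z z n) := by
  set E := word (standardMap f) (standardDigit f) n ⁻¹' {a}
  have hE : MeasurableSet E := measurable_word (measurePreserving_standardMap hf).measurable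
    (measurable_standardDigit hf) n (measurableSet_singleton a)
  have hfiber (p : ℝ) : Prod.mk p ⁻¹' (E ∩ interiorOrbits f) ⊆ orbitFiber f a p := by
    rintro u ⟨hua, hu⟩
    have hq := isOrbitSegment_of_mem_interiorOrbits hu n
    rw [show word (standardMap f) (standardDigit f) n (p, u) = a from hua] at hq
    exact ⟨_, hq, rfl, (iterate_standardMap_snd hu 0).symm⟩
  calc unifSq E = unifSq (E ∩ interiorOrbits f) :=
        (measure_inter_conull (ae_iff.1 (ae_mem_interiorOrbits hf))).symm
    _ = ∫⁻ p, unifI (Prod.mk p ⁻¹' (E ∩ interiorOrbits f)) ∂unifI := by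
        rw [unifSq_eq_prod, Measure.prod_apply (hE.inter (measurableSet_interiorOrbits hf))]
    _ ≤ ∫⁻ _, ENNReal.ofReal (D.distortion / D.orbitContinuant z z n) ∂unifI :=
        lintegral_mono fun p => (Measure.restrict_apply_le _ _).trans
          ((measure_mono (hfiber p)).trans (volume_orbitFiber_le D hz p))
    _ = _ := by simp

theorem le_unifSq_cylinder (hf : Measurable f) (D : FullBranch f) {m l : ℕ} {α : Fin m → ℤ}
    {β : Fin l → ℤ} {z w : ℕ → ℝ} (hz : IsOrbitSegment f α z) (hw : IsOrbitSegment f β w) :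
    ENNReal.ofReal (D.distortion ^ 2 * (D.orbitContinuant z z m * D.orbitContinuant w w l))⁻¹ ≤
      unifSq (word (standardMap f) (standardDigit f) (m + l) ⁻¹' {Fin.append α β}) := by
  set E := word (standardMap f) (standardDigit f) (m + l) ⁻¹' {Fin.append α β}
  have hE : MeasurableSet E := measurable_word (measurePreserving_standardMap hf).measurable
    (measurable_standardDigit hf) _ (measurableSet_singleton _)
  have hfiber (p : ℝ) :
      orbitFiber f (Fin.append α β) p ⊆ Prod.mk p ⁻¹' E ∩ Set.Ico (-(1 : ℝ) / 2) (1 / 2) := by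
    rintro _ ⟨q, hq, rfl, rfl⟩
    have hq1 := abs_lt.1 (hq.abs_lt 1 (by omega))
    exact ⟨hq.word_eq, by linarith [hq1.1], hq1.2⟩
  set R := (D.distortion ^ 2 * (D.orbitContinuant z z m * D.orbitContinuant w w l))⁻¹
  calc ENNReal.ofReal R = ∫⁻ _, ENNReal.ofReal R ∂unifI := by simp
    _ ≤ ∫⁻ p, unifI (Prod.mk p ⁻¹' E) ∂unifI := by
        refine lintegral_mono_ae (ae_abs_lt_half.mono fun p hp => ?_)
        rw [unifI, Measure.restrict_apply' measurableSet_Ico]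
        exact (le_volume_orbitFiber D hz hw hp).trans (measure_mono (hfiber p))
    _ = unifSq E := by rw [unifSq_eq_prod, Measure.prod_apply hE]

theorem quasiBernoulli_standardMap (hf : Measurable f) (D : FullBranch f) :
    QuasiBernoulli (standardMap f) (standardDigit f) (toNNReal (D.distortion ^ 4)⁻¹) unifSq := by
  intro m l α β
  obtain ⟨z, hz, -⟩ := D.exists_isOrbitSegment α (s := 0) (t := 0) (by norm_num) (by norm_num)
  obtain ⟨w, hw, -⟩ := D.exists_isOrbitSegment β (s := 0) (t := 0) (by norm_num) (by norm_num)
  refine le_trans ?_ (le_unifSq_cylinder hf D hz hw)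
  have hS := D.distortion_pos
  have hzpos := D.orbitContinuant_pos z z m
  have hwpos := D.orbitContinuant_pos w w l
  calc _ ≤ ENNReal.ofReal (D.distortion ^ 4)⁻¹ *
        (ENNReal.ofReal (D.distortion / D.orbitContinuant z z m) *
          ENNReal.ofReal (D.distortion / D.orbitContinuant w w l)) := by
        gcongr
        · rfl
        · exact unifSq_cylinder_le hf D hz
        · exact unifSq_cylinder_le hf D hw
    _ = ENNReal.ofReal ((D.distortion ^ 4)⁻¹ *
        (D.distortion / D.orbitContinuant z z m * (D.distortion / D.orbitContinuant w w l))) := by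
        rw [ENNReal.ofReal_mul (by positivity), ENNReal.ofReal_mul (by positivity)]
    _ = _ := by
        congr 1
        field_simp

end StandardMap

section TangentForce

theorem exists_hasDerivAt_inverse {k k' : ℝ → ℝ} {c : ℝ} (hk : ∀ x, HasDerivAt k (k' x) x)
    (hc : 0 < c) (hk' : ∀ x, c ≤ k' x) :
    ∃ g : ℝ → ℝ, (∀ x, g (k x) = x) ∧ (∀ v, k (g v) = v) ∧ ∀ v, HasDerivAt g (k' (g v))⁻¹ v := by
  have hpos (x : ℝ) : 0 < k' x := hc.trans_le (hk' x)
  have hmono : StrictMono k := strictMono_of_deriv_pos fun x => (hk x).deriv ▸ hpos x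
  have hcont : Continuous k := continuous_iff_continuousAt.2 fun x => (hk x).continuousAt
  have hsub : Monotone fun x => k x - c * x := by
    have hderiv (x : ℝ) : HasDerivAt (fun x => k x - c * x) (k' x - c) x := by
      simpa only [mul_one] using (hk x).fun_sub ((hasDerivAt_id' x).const_mul c)
    exact monotone_of_deriv_nonneg (fun x => (hderiv x).differentiableAt) fun x =>
      (hderiv x).deriv ▸ sub_nonneg.2 (hk' x)
  have htop : Tendsto k atTop atTop := by
    refine tendsto_atTop_mono' atTop ?_
      (tendsto_atTop_add_const_left atTop (k 0) (tendsto_id.const_mul_atTop hc))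
    filter_upwards [eventually_ge_atTop 0] with x hx
    simpa [le_sub_iff_add_le] using hsub hx
  have hbot : Tendsto k atBot atBot := by
    refine tendsto_atBot_mono' atBot ?_
      (tendsto_atBot_add_const_left atBot (k 0) (tendsto_id.const_mul_atBot hc))
    filter_upwards [eventually_le_atBot 0] with x hx
    simpa [sub_le_iff_le_add] using hsub hx
  let e := hmono.orderIsoOfSurjective k (hcont.surjective htop hbot)
  refine ⟨e.symm, e.symm_apply_apply, e.apply_symm_apply, fun v => ?_⟩
  exact (hk _).of_local_left_inverse e.symm.continuous.continuousAt (hpos _).ne'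
    (.of_forall e.apply_symm_apply)

/-- The derivative of the potential of the map `Ttilde ε`. -/
noncomputable def tangentForce (ε q : ℝ) : ℝ := 2 * q - 2 * ε * tan (π * q)

/-- The function `tangentForce ε`, with sign `σ`, in the coordinate `X = tan (π q)`. -/
noncomputable def tangentChart (ε σ X : ℝ) : ℝ := σ * (2 / π * arctan X - 2 * ε * X)

/-- The derivative of `tangentForce ε`, with sign `σ`, in the coordinate `X = tan (π q)`. -/
noncomputable def tangentSlope (ε σ X : ℝ) : ℝ := σ * (2 - 2 * π * ε * (1 + X ^ 2))

theorem measurable_tan : Measurable tan := by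
  rw [funext tan_eq_sin_div_cos]
  exact measurable_sin.div measurable_cos

theorem measurable_tangentForce (ε : ℝ) : Measurable (tangentForce ε) := by
  have := measurable_tan
  unfold tangentForce
  fun_prop

theorem Ttilde_eq_standardMap (ε : ℝ) : Ttilde ε = standardMap (tangentForce ε) := by
  funext x
  rw [Ttilde, standardMap, tangentForce, sub_right_comm]

variable {ε σ : ℝ}

theorem arctan_tan_pi_mul {q : ℝ} (hq : |q| < 1 / 2) : arctan (tan (π * q)) = π * q := by
  have := pi_pos
  obtain ⟨h₁, h₂⟩ := abs_lt.1 hq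
  exact arctan_tan (by nlinarith) (by nlinarith)

theorem tangentChart_tan {q : ℝ} (hq : |q| < 1 / 2) :
    tangentChart ε σ (tan (π * q)) = σ * tangentForce ε q := by
  rw [tangentChart, tangentForce, arctan_tan_pi_mul hq]
  field_simp

theorem tangentChart_eq (X : ℝ) :
    tangentChart ε σ X = σ * tangentForce ε (arctan X / π) := by
  rw [tangentChart, tangentForce, mul_div_cancel₀ _ pi_ne_zero, tan_arctan]
  ring

theorem hasDerivAt_tangentChart (X : ℝ) :
    HasDerivAt (tangentChart ε σ) (tangentSlope ε σ X / (π * (1 + X ^ 2))) X := by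
  have h := (((hasDerivAt_arctan X).const_mul (2 / π)).sub
    ((hasDerivAt_id X).const_mul (2 * ε))).const_mul σ
  refine h.congr_deriv ?_
  rw [tangentSlope]
  field_simp

theorem hasDerivAt_tangentSlope (X : ℝ) :
    HasDerivAt (tangentSlope ε σ) (-(4 * π * (σ * ε) * X)) X := by
  have h := (((hasDerivAt_pow 2 X).const_add 1).const_mul (2 * π * ε)).const_sub 2 |>.const_mul σ
  refine h.congr_deriv ?_
  norm_num
  ring

section Expanding

variable (hσ : |σ| = 1) (h : 2 < σ * (2 - 2 * π * ε))
include hσ h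

theorem sign_mul_eq_neg_abs : σ * ε = -|ε| := by
  rcases eq_or_eq_neg_of_abs_eq hσ with rfl | rfl
  · have : ε < 0 := by nlinarith [pi_pos]
    rw [abs_of_neg this, one_mul, neg_neg]
  · have : 0 < ε := by nlinarith [pi_pos]
    rw [abs_of_pos this, neg_one_mul]

theorem abs_pos_of_two_lt : 0 < |ε| := by
  refine abs_pos.2 fun h0 => ?_
  rw [h0, mul_zero, sub_zero] at h
  linarith [hσ.le, le_abs_self σ]

theorem le_tangentSlope (X : ℝ) : σ * (2 - 2 * π * ε) ≤ tangentSlope ε σ X := by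
  have := sign_mul_eq_neg_abs hσ h
  have : tangentSlope ε σ X = σ * (2 - 2 * π * ε) + 2 * π * |ε| * X ^ 2 := by
    rw [tangentSlope]
    linear_combination -2 * π * X ^ 2 * this
  rw [this]
  exact le_add_of_nonneg_right (by positivity)

theorem mul_one_add_sq_le_tangentSlope (X : ℝ) :
    π * |ε| * (1 + X ^ 2) ≤ tangentSlope ε σ X := by
  have hε := sign_mul_eq_neg_abs hσ h
  have hsq : 0 ≤ π * |ε| * X ^ 2 := by positivity
  have hpos : 0 < π * |ε| := mul_pos pi_pos (abs_pos_of_two_lt hσ h)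
  have hslope : tangentSlope ε σ X = 2 * σ + 2 * (π * |ε|) * (1 + X ^ 2) := by
    rw [tangentSlope]
    linear_combination -2 * π * (1 + X ^ 2) * hε
  have hL : 2 < 2 * σ + 2 * (π * |ε|) := by linear_combination h - 2 * π * hε
  rcases eq_or_eq_neg_of_abs_eq hσ with rfl | rfl <;> rw [hslope] <;> linarith

theorem tangentSlope_pos (X : ℝ) : 0 < tangentSlope ε σ X :=
  two_pos.trans (h.trans_le (le_tangentSlope hσ h X))

theorem lipschitzWith_log_inv_tangentSlope {g : ℝ → ℝ}
    (hg : ∀ v, HasDerivAt g (π * (1 + g v ^ 2) / tangentSlope ε σ (g v)) v) :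
    LipschitzWith (2 / ‖ε‖₊) fun v => log (tangentSlope ε σ (g v))⁻¹ := by
  have hderiv (v : ℝ) : HasDerivAt (fun v => log (tangentSlope ε σ (g v))⁻¹)
      (-(4 * π ^ 2 * |ε| * g v * (1 + g v ^ 2) / tangentSlope ε σ (g v) ^ 2)) v := by
    have := (((hasDerivAt_tangentSlope (g v)).comp v (hg v)).log
      (tangentSlope_pos hσ h (g v)).ne').neg
    simp only [log_inv]
    refine this.congr_deriv ?_
    rw [sign_mul_eq_neg_abs hσ h, Function.comp_apply]
    ring
  refine lipschitzWith_of_nnnorm_deriv_le (fun v => (hderiv v).differentiableAt) fun v => ?_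
  set X := g v
  have hε := abs_pos_of_two_lt hσ h
  have hB := mul_one_add_sq_le_tangentSlope hσ h X
  have hX : 2 * |X| ≤ 1 + X ^ 2 := by nlinarith [sq_nonneg (|X| - 1), sq_abs X]
  rw [← NNReal.coe_le_coe, coe_nnnorm, (hderiv v).deriv, norm_neg, norm_eq_abs, NNReal.coe_div,
    coe_nnnorm, norm_eq_abs, NNReal.coe_ofNat, abs_div, abs_mul, abs_mul, abs_mul, abs_abs,
    abs_of_pos (by positivity : 0 < 4 * π ^ 2), abs_of_pos (by positivity : 0 < 1 + X ^ 2),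
    abs_of_nonneg (sq_nonneg (tangentSlope ε σ X))]
  calc 4 * π ^ 2 * |ε| * |X| * (1 + X ^ 2) / tangentSlope ε σ X ^ 2
      ≤ 2 * π ^ 2 * |ε| * (1 + X ^ 2) * (1 + X ^ 2) / (π * |ε| * (1 + X ^ 2)) ^ 2 := by
        gcongr ?_ * (1 + X ^ 2) / ?_ ^ 2
        linear_combination 2 * π ^ 2 * |ε| * hX
    _ = 2 / |ε| := by field_simp

theorem nonempty_fullBranch_of_two_lt : Nonempty (FullBranch (tangentForce ε)) := by
  have hslope (X : ℝ) : |ε| ≤ tangentSlope ε σ X / (π * (1 + X ^ 2)) := by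
    rw [le_div_iff₀ (by positivity)]
    linarith [mul_one_add_sq_le_tangentSlope hσ h X]
  obtain ⟨g, hgl, hgr, hg⟩ := exists_hasDerivAt_inverse hasDerivAt_tangentChart
    (abs_pos_of_two_lt hσ h) hslope
  simp only [inv_div] at hg
  have hσσ : σ * σ = 1 := by rw [← abs_mul_abs_self, hσ, mul_one]
  have hmulσ : LipschitzWith 1 fun u => σ * u :=
    (NNReal.eq hσ : ‖σ‖₊ = 1) ▸ lipschitzWith_smul σ
  refine ⟨{
    inv u := arctan (g (σ * u)) / π
    ρ u := (tangentSlope ε σ (g (σ * u)))⁻¹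
    σ := σ
    L := σ * (2 - 2 * π * ε)
    C := 2 / ‖ε‖₊
    abs_σ := hσ
    two_lt := h
    hasDerivAt_inv u := ?_
    ρ_pos u := inv_pos.2 (tangentSlope_pos hσ h _)
    ρ_le u := inv_anti₀ (two_pos.trans h) (le_tangentSlope hσ h _)
    lipschitzWith_log := by
      simpa only [mul_one, Function.comp_def] using
        (lipschitzWith_log_inv_tangentSlope hσ h hg).comp hmulσ
    abs_inv_lt u := ?_
    inv_apply x hx := ?_
    apply_inv u := ?_ }⟩
  · have := (((hg (σ * u)).comp u ((hasDerivAt_id u).const_mul σ)).arctan).div_const π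
    refine this.congr_deriv ?_
    have := tangentSlope_pos hσ h (g (σ * u))
    rw [Function.comp_apply]
    field_simp
  · rw [abs_div, abs_of_pos pi_pos, div_lt_iff₀ pi_pos, abs_lt]
    constructor <;>
      linarith [neg_pi_div_two_lt_arctan (g (σ * u)), arctan_lt_pi_div_two (g (σ * u))]
  · rw [← tangentChart_tan hx, hgl, arctan_tan_pi_mul hx, mul_div_cancel_left₀ _ pi_ne_zero]
  · have := hgr (σ * u)
    rw [tangentChart_eq] at this
    exact mul_left_cancel₀ (left_ne_zero_of_mul_eq_one hσσ) this

end Expanding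

theorem nonempty_fullBranch_tangentForce (hε : ε < 0 ∨ 2 / π < ε) :
    Nonempty (FullBranch (tangentForce ε)) := by
  rcases hε with h | h
  · exact nonempty_fullBranch_of_two_lt (σ := 1) (by norm_num) (by nlinarith [pi_pos])
  · rw [div_lt_iff₀ pi_pos] at h
    exact nonempty_fullBranch_of_two_lt (σ := -1) (by norm_num) (by linarith)

end TangentForce

theorem stmt10_general {f : ℝ → ℝ} (hf : Measurable f) (D : FullBranch f) {A B : Set (ℝ × ℝ)}
    (hA : MeasurableSet A) (hB : MeasurableSet B) :
    Tendsto (fun n : ℕ => unifSq ((standardMap f)^[n] ⁻¹' A ∩ B)) atTop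
      (nhds (unifSq A * unifSq B)) :=
  (quasiBernoulli_standardMap hf D).tendsto_measure_preimage_inter
    (toNNReal_pos.2 (inv_pos.2 (pow_pos D.distortion_pos 4))) (measurePreserving_standardMap hf)
    (measurable_standardDigit hf) (isGenerating_interiorOrbits D) (ae_mem_interiorOrbits hf) hA hB

theorem stmt10 (ε : ℝ) (hε : ε < 0 ∨ 2 / Real.pi < ε) :
    ∀ A B : Set (ℝ × ℝ), A ⊆ unitSq → B ⊆ unitSq →
      MeasurableSet A → MeasurableSet B →
      Tendsto (fun n : ℕ => unifSq ((Ttilde ε)^[n] ⁻¹' A ∩ B)) atTop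
        (nhds (unifSq A * unifSq B)) := by
  intro A B _ _ hA hB
  obtain ⟨D⟩ := nonempty_fullBranch_tangentForce hε
  exact Ttilde_eq_standardMap ε ▸ stmt10_general (measurable_tangentForce ε) D hA hB
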